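/- arXiv:2205.00153 — 4 statements merged into one kernel-verified Lean document; each statement's English description precedes it below -/
import Mathlib

section
/- For every compact set K ⊂ ℂ∖[β₁, α] one has, as g → ∞, sup_{λ∈K} | Σ_{j=2}^{g} Log((λ − α_j^{(g)})/(λ − β_j^{(g)})) − (1/g) Σ_{j=2}^{g} w_j^{(g)} / ( ρ(β_j^{(g)}) (λ − β_j^{(g)}) ) | → 0, where for all sufficiently large g each quantity (λ − α_j^{(g)})/(λ − β_j^{(g)}) lies outside (−∞, 0] so that the principal logarithm is defined. -/
open Complex Filter MeasureTheory

/-!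
The quotient `(z - a) / (z - b)` is a nonpositive real only for `z` on the segment from `a` to `b`,
so `Log ((z - a) / (z - b)) = ∫_a^b dt / (z - t)` off that segment. Hence each summand of the
difference is `∫_a^b ρ(t) (h(z, t) - h(z, b)) dt` with `h(z, t) = 1 / (ρ(t) (z - t))`. The function
`h` is uniformly continuous on `K × [β₁, α]`, and `b - a` is small as soon as the mass
`v = ∫_a^b ρ` is, so the summand is `o(v)`, uniformly in `z`, `a` and `b`. The masses are `O(1 / g)`
and there are at most `g` of them.
-/

lemma div_sub_mem_slitPlane_of_notMem_segment {a b z : ℂ} (hz : z ∉ segment ℝ a b) :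
    (z - a) / (z - b) ∈ slitPlane := by
  have hzb : z - b ≠ 0 := sub_ne_zero.2 fun h ↦ hz (h ▸ right_mem_segment ℝ a b)
  rw [mem_slitPlane_iff_not_le_zero]
  intro hle
  obtain ⟨hre, him⟩ := Complex.nonpos_iff.1 hle
  have hquot : (z - a) / (z - b) = (((z - a) / (z - b)).re : ℂ) := Complex.ext rfl him
  have hsmul : z - a = (-((z - a) / (z - b)).re) • (b - z) := by
    rw [real_smul, ofReal_neg, ← hquot]
    field_simp
    ring
  refine hz (mem_segment_iff_sameRay.2 ?_)
  rw [hsmul]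
  exact SameRay.sameRay_nonneg_smul_left _ (neg_nonneg.2 hre)

section LogIntegral

variable {a b : ℝ} {z : ℂ}

lemma div_sub_ofReal_mem_slitPlane (hz : z ∉ ofReal '' Set.uIcc a b) :
    (z - a) / (z - b) ∈ slitPlane := by
  apply div_sub_mem_slitPlane_of_notMem_segment
  rw [← segment_eq_uIcc] at hz
  exact image_segment ℝ ofRealCLM.toLinearMap.toAffineMap a b ▸ hz

lemma integral_inv_sub_ofReal (hz : z ∉ ofReal '' Set.uIcc a b) :
    ∫ t in a..b, (z - (t : ℂ))⁻¹ = log ((z - a) / (z - b)) := by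
  have hne : ∀ t ∈ Set.uIcc a b, z - (t : ℂ) ≠ 0 := fun t ht h ↦
    hz ⟨t, ht, (sub_eq_zero.1 h).symm⟩
  have hza : z - a ≠ 0 := hne a Set.left_mem_uIcc
  have hderiv : ∀ t ∈ Set.uIcc a b,
      HasDerivAt (fun s : ℝ ↦ log ((z - a) / (z - s))) (z - t)⁻¹ t := by
    intro t ht
    have hzt := hne t ht
    have hslit : (z - a) / (z - t) ∈ slitPlane := div_sub_ofReal_mem_slitPlane fun h ↦
      hz (Set.image_mono (Set.uIcc_subset_uIcc_left ht) h)
    have hquot : HasDerivAt (fun s : ℂ ↦ (z - a) / (z - s)) ((z - a) / (z - t) ^ 2) t := by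
      simpa [div_eq_mul_inv] using
        (((hasDerivAt_id' (t : ℂ)).const_sub z).fun_inv hzt).const_mul (z - a)
    convert (hquot.clog hslit).comp_ofReal using 1
    field_simp
  have hcont : ContinuousOn (fun t : ℝ ↦ (z - t)⁻¹) (Set.uIcc a b) :=
    ContinuousOn.inv₀ (by fun_prop) hne
  rw [intervalIntegral.integral_eq_sub_of_hasDerivAt hderiv hcont.intervalIntegrable,
    div_self hza, log_one, sub_zero]

end LogIntegral

section Density

variable {ρ : ℝ → ℝ} {a b : ℝ}

lemma mul_abs_sub_le_abs_integral {m : ℝ} (hm : 0 ≤ m) (hρ : IntervalIntegrable ρ volume a b)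
    (hmρ : ∀ t ∈ Set.uIcc a b, m ≤ ρ t) : m * |b - a| ≤ |∫ t in a..b, ρ t| := by
  have hle : ∀ᵐ t ∂volume.restrict (Set.uIoc a b), ‖m‖ ≤ ρ t :=
    (ae_restrict_iff' measurableSet_uIoc).2 <| .of_forall fun t ht ↦
      (Real.norm_of_nonneg hm).trans_le (hmρ t (Set.uIoc_subset_uIcc ht))
  simpa [abs_mul, abs_of_nonneg hm, mul_comm] using
    intervalIntegral.norm_integral_le_abs_of_norm_le hle hρ

lemma norm_integral_sub_smul_le {E : Type*} [NormedAddCommGroup E] [NormedSpace ℝ E]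
    [CompleteSpace E] {f : ℝ → E} {c : E} {ε : ℝ} (hf : IntervalIntegrable f volume a b)
    (hρ : IntervalIntegrable ρ volume a b)
    (hle : ∀ t ∈ Set.uIcc a b, ‖f t - ρ t • c‖ ≤ ε * ρ t) :
    ‖(∫ t in a..b, f t) - (∫ t in a..b, ρ t) • c‖ ≤ |ε * ∫ t in a..b, ρ t| := by
  rw [← intervalIntegral.integral_smul_const,
    ← intervalIntegral.integral_sub hf (hρ.smul_continuousOn continuousOn_const),
    ← intervalIntegral.integral_const_mul]
  refine intervalIntegral.norm_integral_le_abs_of_norm_le ?_ (hρ.const_mul ε)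
  exact (ae_restrict_iff' measurableSet_uIoc).2 <| .of_forall fun t ht ↦
    hle t (Set.uIoc_subset_uIcc ht)

lemma norm_log_div_sub_le {z : ℂ} {ε : ℝ} (hρc : ContinuousOn ρ (Set.uIcc a b))
    (hρpos : ∀ t ∈ Set.uIcc a b, 0 < ρ t) (hz : z ∉ ofReal '' Set.uIcc a b)
    (hosc : ∀ t ∈ Set.uIcc a b,
      ‖((ρ t : ℂ) * (z - t))⁻¹ - ((ρ b : ℂ) * (z - b))⁻¹‖ ≤ ε) :
    ‖log ((z - a) / (z - b)) - ((∫ t in a..b, ρ t : ℝ) : ℂ) / ((ρ b : ℂ) * (z - b))‖ ≤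
      ε * |∫ t in a..b, ρ t| := by
  have hε : 0 ≤ ε := (norm_nonneg _).trans (hosc b Set.right_mem_uIcc)
  have hinv : ContinuousOn (fun t : ℝ ↦ (z - t)⁻¹) (Set.uIcc a b) :=
    ContinuousOn.inv₀ (by fun_prop) fun t ht h ↦ hz ⟨t, ht, (sub_eq_zero.1 h).symm⟩
  have hpoint : ∀ t ∈ Set.uIcc a b,
      ‖(z - t)⁻¹ - ρ t • ((ρ b : ℂ) * (z - b))⁻¹‖ ≤ ε * ρ t := by
    intro t ht
    have hρt : (ρ t : ℂ) ≠ 0 := ofReal_ne_zero.2 (hρpos t ht).ne'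
    have hscale : (z - t)⁻¹ - ρ t • ((ρ b : ℂ) * (z - b))⁻¹ =
        ρ t • (((ρ t : ℂ) * (z - t))⁻¹ - ((ρ b : ℂ) * (z - b))⁻¹) := by
      rw [smul_sub, real_smul (z := ((ρ t : ℂ) * (z - t))⁻¹), mul_inv (ρ t : ℂ),
        mul_inv_cancel_left₀ hρt]
    rw [hscale, norm_smul, Real.norm_of_nonneg (hρpos t ht).le, mul_comm]
    exact mul_le_mul_of_nonneg_right (hosc t ht) (hρpos t ht).le
  simpa [integral_inv_sub_ofReal hz, abs_mul, abs_of_nonneg hε, div_eq_mul_inv] using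
    norm_integral_sub_smul_le hinv.intervalIntegrable hρc.intervalIntegrable hpoint

end Density

section Uniform

variable {c d : ℝ} {ρ : ℝ → ℝ} {K : Set ℂ}

lemma continuousOn_inv_mul_sub_ofReal (hρc : ContinuousOn ρ (Set.Icc c d))
    (hρpos : ∀ y ∈ Set.Icc c d, 0 < ρ y) (hKcd : K ⊆ (ofReal '' Set.Icc c d)ᶜ) :
    ContinuousOn (fun p : ℂ × ℝ ↦ ((ρ p.2 : ℂ) * (p.1 - p.2))⁻¹) (K ×ˢ Set.Icc c d) := by
  have hρ : ContinuousOn (fun p : ℂ × ℝ ↦ (ρ p.2 : ℂ)) (K ×ˢ Set.Icc c d) :=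
    continuous_ofReal.comp_continuousOn (hρc.comp continuousOn_snd fun p hp ↦ hp.2)
  refine (hρ.mul (by fun_prop)).inv₀ fun p hp ↦ mul_ne_zero ?_ ?_
  · exact ofReal_ne_zero.2 (hρpos p.2 hp.2).ne'
  · exact sub_ne_zero.2 fun h ↦ hKcd hp.1 ⟨p.2, hp.2, h.symm⟩

lemma exists_forall_norm_log_div_sub_le (hρc : ContinuousOn ρ (Set.Icc c d))
    (hρpos : ∀ y ∈ Set.Icc c d, 0 < ρ y) (hK : IsCompact K)
    (hKcd : K ⊆ (ofReal '' Set.Icc c d)ᶜ) {ε : ℝ} (hε : 0 < ε) :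
    ∃ δ > 0, ∀ a ∈ Set.Icc c d, ∀ b ∈ Set.Icc c d, |∫ t in a..b, ρ t| < δ → ∀ z ∈ K,
      ‖log ((z - a) / (z - b)) - ((∫ t in a..b, ρ t : ℝ) : ℂ) / ((ρ b : ℂ) * (z - b))‖ ≤
        ε * |∫ t in a..b, ρ t| := by
  obtain ⟨m, hm, hmρ⟩ := isCompact_Icc.exists_forall_le' hρc hρpos
  obtain ⟨η, hη, hosc⟩ := Metric.uniformContinuousOn_iff.1
    ((hK.prod isCompact_Icc).uniformContinuousOn_of_continuous
      (continuousOn_inv_mul_sub_ofReal hρc hρpos hKcd)) ε hε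
  refine ⟨m * η, mul_pos hm hη, fun a ha b hb hab z hz ↦ ?_⟩
  have hsub : Set.uIcc a b ⊆ Set.Icc c d := Set.uIcc_subset_Icc ha hb
  have hlen : |b - a| < η := lt_of_mul_lt_mul_left
    ((mul_abs_sub_le_abs_integral hm.le (hρc.mono hsub).intervalIntegrable
      fun t ht ↦ hmρ t (hsub ht)).trans_lt hab) hm.le
  refine norm_log_div_sub_le (hρc.mono hsub) (fun t ht ↦ hρpos t (hsub ht))
    (fun h ↦ hKcd hz (Set.image_mono hsub h)) fun t ht ↦ ?_
  rw [← dist_eq_norm]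
  refine (hosc (z, t) ⟨hz, hsub ht⟩ (z, b) ⟨hz, hb⟩ ?_).le
  rw [dist_prod_same_left, dist_comm, Real.dist_eq]
  exact (Set.abs_sub_right_of_mem_uIcc ht).trans_lt hlen

lemma tendstoUniformlyOn_sum_log_div_sub {ι κ : Type*} {L : Filter ι} {s : ι → Finset κ}
    {a b : ι → κ → ℝ} {C : ℝ} (hρc : ContinuousOn ρ (Set.Icc c d))
    (hρpos : ∀ y ∈ Set.Icc c d, 0 < ρ y) (hK : IsCompact K)
    (hKcd : K ⊆ (ofReal '' Set.Icc c d)ᶜ)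
    (ha : ∀ i, ∀ j ∈ s i, a i j ∈ Set.Icc c d) (hb : ∀ i, ∀ j ∈ s i, b i j ∈ Set.Icc c d)
    (hsmall : ∀ δ > 0, ∀ᶠ i in L, ∀ j ∈ s i, |∫ t in a i j..b i j, ρ t| < δ)
    (hsum : ∀ᶠ i in L, ∑ j ∈ s i, |∫ t in a i j..b i j, ρ t| ≤ C) :
    TendstoUniformlyOn
      (fun i z ↦ ∑ j ∈ s i, (log ((z - a i j) / (z - b i j)) -
        ((∫ t in a i j..b i j, ρ t : ℝ) : ℂ) / ((ρ (b i j) : ℂ) * (z - b i j))))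
      (fun _ ↦ 0) L K := by
  rw [Metric.tendstoUniformlyOn_iff]
  intro ε hε
  obtain ⟨ε', hε', hε'C⟩ := exists_pos_mul_lt hε C
  obtain ⟨δ, hδ, hterm⟩ := exists_forall_norm_log_div_sub_le hρc hρpos hK hKcd hε'
  filter_upwards [hsmall δ hδ, hsum] with i hi hiC z hz
  rw [dist_zero_left]
  calc _ ≤ ∑ j ∈ s i, ε' * |∫ t in a i j..b i j, ρ t| := norm_sum_le_of_le _ fun j hj ↦
          hterm _ (ha i j hj) _ (hb i j hj) (hi j hj) z hz
    _ = (∑ j ∈ s i, |∫ t in a i j..b i j, ρ t|) * ε' := by rw [← Finset.mul_sum, mul_comm]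
    _ ≤ C * ε' := mul_le_mul_of_nonneg_right hiC hε'.le
    _ < ε := hε'C

theorem stmt_0_general {κ : Type*} (hρc : ContinuousOn ρ (Set.Icc c d))
    (hρpos : ∀ y ∈ Set.Icc c d, 0 < ρ y) {σ : ℝ → ℝ} (hσ : ∀ t, σ t = ∫ y in c..t, ρ y)
    {s : ℕ → Finset κ} (hs : ∀ g, (s g).card ≤ g) {a b w : ℕ → κ → ℝ} {C : ℝ}
    (hw : ∀ g, ∀ j ∈ s g, |w g j| ≤ C)
    (ha : ∀ g, ∀ j ∈ s g, a g j ∈ Set.Icc c d) (hb : ∀ g, ∀ j ∈ s g, b g j ∈ Set.Icc c d)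
    (hσab : ∀ g, ∀ j ∈ s g, σ (b g j) - σ (a g j) = w g j / g)
    (hK : IsCompact K) (hKcd : K ⊆ (ofReal '' Set.Icc c d)ᶜ) :
    (∀ g, ∀ z ∈ K, ∀ j ∈ s g, (z - a g j) / (z - b g j) ∈ slitPlane) ∧
    TendstoUniformlyOn
      (fun g z ↦ (∑ j ∈ s g, log ((z - a g j) / (z - b g j))) -
        (1 / (g : ℂ)) * ∑ j ∈ s g, (w g j : ℂ) / ((ρ (b g j) : ℂ) * (z - b g j)))
      (fun _ ↦ 0) atTop K := by
  have hmass : ∀ g, ∀ j ∈ s g, ∫ t in a g j..b g j, ρ t = w g j / g := fun g j hj ↦ by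
    have hint : ∀ x ∈ Set.Icc c d, IntervalIntegrable ρ volume c x := fun x hx ↦
      (hρc.mono (Set.uIcc_subset_Icc ⟨le_rfl, hx.1.trans hx.2⟩ hx)).intervalIntegrable
    rw [← hσab g j hj, hσ, hσ, intervalIntegral.integral_interval_sub_left
      (hint _ (hb g j hj)) (hint _ (ha g j hj))]
  have habs : ∀ g, ∀ j ∈ s g, |∫ t in a g j..b g j, ρ t| ≤ |C| / g := fun g j hj ↦ by
    rw [hmass g j hj, abs_div, Nat.abs_cast]
    exact div_le_div_of_nonneg_right ((hw g j hj).trans (le_abs_self C)) g.cast_nonneg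
  refine ⟨fun g z hz j hj ↦ div_sub_ofReal_mem_slitPlane fun h ↦
    hKcd hz (Set.image_mono (Set.uIcc_subset_Icc (ha g j hj) (hb g j hj)) h), ?_⟩
  refine (tendstoUniformlyOn_sum_log_div_sub hρc hρpos hK hKcd ha hb (C := |C|)
    (fun δ hδ ↦ ?_) (.of_forall fun g ↦ ?_)).congr (.of_forall fun g z _ ↦ ?_)
  · filter_upwards [(tendsto_const_div_atTop_nhds_zero_nat |C|).eventually_lt_const hδ]
      with g hg j hj using (habs g j hj).trans_lt hg
  · calc ∑ j ∈ s g, |∫ t in a g j..b g j, ρ t|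
        ≤ (s g).card • (|C| / g) := Finset.sum_le_card_nsmul _ _ _ (habs g)
      _ ≤ g • (|C| / g) := nsmul_le_nsmul_left (by positivity) (hs g)
      _ ≤ |C| := by
        rw [nsmul_eq_mul, mul_div_left_comm]
        exact mul_le_of_le_one_right (abs_nonneg C) (div_self_le_one _)
  · beta_reduce
    rw [Finset.sum_sub_distrib, Finset.mul_sum]
    congr 1
    refine Finset.sum_congr rfl fun j hj ↦ ?_
    rw [hmass g j hj]
    push_cast
    ring

end Uniform

/-- Fix `0 < β₁ < α` and a continuous positive density `ρ` on `[β₁, α]` with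
total integral 1, and let `σ t = ∫_{β₁}^t ρ`.  For each `g ≥ 2` let `w g j ∈ (0,1)` and let
`a g j, b g j ∈ [β₁, α]` satisfy `σ (a g j) = (j-1)/g` and `σ (b g j) = (j-1+w g j)/g`
for `j = 2, …, g`.  Then for every compact `K ⊆ ℂ ∖ [β₁, α]`: for all sufficiently large `g`
each quantity `(z - a g j)/(z - b g j)` lies in the slit plane (off `(-∞,0]`), and
`∑_{j=2}^g Log((z - a g j)/(z - b g j)) - (1/g) ∑_{j=2}^g (w g j)/(ρ(b g j)(z - b g j)) → 0`
uniformly on `K` as `g → ∞`. -/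
theorem stmt_0
    (β₁ α : ℝ) (hβ₁ : 0 < β₁) (hβα : β₁ < α)
    (ρ : ℝ → ℝ) (hρc : ContinuousOn ρ (Set.Icc β₁ α))
    (hρpos : ∀ y ∈ Set.Icc β₁ α, 0 < ρ y)
    (hρint : (∫ y in β₁..α, ρ y) = 1)
    (σ : ℝ → ℝ) (hσ : ∀ t, σ t = ∫ y in β₁..t, ρ y)
    (a b w : ℕ → ℕ → ℝ)
    (hmem : ∀ g, 2 ≤ g → ∀ j ∈ Finset.Icc 2 g,
      w g j ∈ Set.Ioo (0:ℝ) 1 ∧ a g j ∈ Set.Icc β₁ α ∧ b g j ∈ Set.Icc β₁ α)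
    (hσa : ∀ g, 2 ≤ g → ∀ j ∈ Finset.Icc 2 g, σ (a g j) = ((j : ℝ) - 1) / g)
    (hσb : ∀ g, 2 ≤ g → ∀ j ∈ Finset.Icc 2 g, σ (b g j) = ((j : ℝ) - 1 + w g j) / g)
    (K : Set ℂ) (hK : IsCompact K)
    (hKΩ : K ⊆ ((fun x : ℝ => (x : ℂ)) '' Set.Icc β₁ α)ᶜ) :
    (∀ᶠ g in atTop, ∀ z ∈ K, ∀ j ∈ Finset.Icc 2 g,
      (z - (a g j : ℂ)) / (z - (b g j : ℂ)) ∈ Complex.slitPlane) ∧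
    TendstoUniformlyOn
      (fun g z =>
        (∑ j ∈ Finset.Icc 2 g, Complex.log ((z - (a g j : ℂ)) / (z - (b g j : ℂ)))) -
          (1 / (g : ℂ)) * ∑ j ∈ Finset.Icc 2 g,
            (w g j : ℂ) / ((ρ (b g j) : ℂ) * (z - (b g j : ℂ))))
      (fun _ => 0) atTop K := by
  have two_le {g j : ℕ} (hj : j ∈ Finset.Icc 2 g) : 2 ≤ g :=
    (Finset.mem_Icc.1 hj).1.trans (Finset.mem_Icc.1 hj).2
  have hw : ∀ g, ∀ j ∈ Finset.Icc 2 g, |w g j| ≤ 1 := fun g j hj ↦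
    have hwj := (hmem g (two_le hj) j hj).1
    (abs_of_pos hwj.1).trans_le hwj.2.le
  have hσab : ∀ g, ∀ j ∈ Finset.Icc 2 g, σ (b g j) - σ (a g j) = w g j / g := fun g j hj ↦ by
    rw [hσa g (two_le hj) j hj, hσb g (two_le hj) j hj]
    ring
  exact (stmt_0_general hρc hρpos hσ (fun g ↦ by rw [Nat.card_Icc]; lia) hw
    (fun g j hj ↦ (hmem g (two_le hj) j hj).2.1) (fun g j hj ↦ (hmem g (two_le hj) j hj).2.2)
    hσab hK hKΩ).imp_left .of_forall
end

section
/- Suppose in addition that w_j^{(g)} = v(β_j^{(g)}) for a continuous function v : [β₁, α] → (0,1) (i.e. the points β_j^{(g)} satisfy σ(β_j^{(g)}) = (j−1+v(β_j^{(g)}))/g). Then for every compact set K ⊂ ℂ∖[β₁, α], sup_{λ∈K} | Σ_{j=2}^{g} Log((λ − α_j^{(g)})/(λ − β_j^{(g)})) − ∫_{β₁}^{α} v(y)/(λ − y) dy | → 0 as g → ∞; that is, log B_g(λ) converges to ∫_{β₁}^{α} v(y)/(λ − y) dy uniformly on compact subsets of ℂ∖[β₁, α]. -/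
open Complex Filter MeasureTheory

/-!
Off the segment `[a, b]` the quotient `(z - a) / (z - b)` avoids the branch cut, so
`Log ((z - a) / (z - b))` is exactly `∫ t in a..b, 1 / (z - t)`. The quantiles `a_j` cut
`[β₁, α]` into cells of `ρ`-mass `1 / g`, hence of length `O(1 / g)`, and `b_j` cuts off the
fraction `v (b_j)` of the mass of its cell. Since `ρ` is nearly constant on a short cell, `b_j`
cuts off nearly the same fraction of its length, so the logarithm differs from the integral of
`v t / (z - t)` over the cell by a small multiple of the length of the cell, uniformly for `z` at
distance at least `d` from `[β₁, α]`. These errors add up to a small multiple of `α - β₁`; the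
cell `[β₁, a_2]`, which corresponds to no factor, contributes `O(1 / g)`.
-/

section LogAsIntegral

lemma div_mem_slitPlane_of_notMem_segment {z p q : ℂ} (hz : z ∉ segment ℝ p q) :
    (z - p) / (z - q) ∈ slitPlane := by
  by_contra hslit
  obtain ⟨hre, him⟩ : ((z - p) / (z - q)).re ≤ 0 ∧ ((z - p) / (z - q)).im = 0 := by
    simpa only [mem_slitPlane_iff, not_or, not_lt, not_not] using hslit
  set r : ℝ := ((z - p) / (z - q)).re
  have hr : (z - p) / (z - q) = r := Complex.ext rfl him
  have hzq : z - q ≠ 0 := sub_ne_zero.2 fun h => hz (h ▸ right_mem_segment ℝ p q)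
  have hr1 : 1 - r ≠ 0 := by linarith
  have hr1' : (1 - r : ℂ) ≠ 0 := by exact_mod_cast hr1
  rw [div_eq_iff hzq] at hr
  refine hz ⟨1 / (1 - r), -r / (1 - r), by bound, by bound, by field_simp; ring, ?_⟩
  simp only [real_smul]
  push_cast
  field_simp
  linear_combination -hr

lemma ofReal_image_uIcc (x y : ℝ) :
    ((↑) : ℝ → ℂ) '' Set.uIcc x y = segment ℝ (x : ℂ) y := by
  rw [← segment_eq_uIcc]
  exact image_segment ℝ ofRealCLM.toLinearMap.toAffineMap x y

lemma integral_one_div_sub_eq_log {z : ℂ} {x y : ℝ} (hz : ∀ t ∈ Set.uIcc x y, z ≠ (t : ℂ)) :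
    ∫ t in x..y, 1 / (z - (t : ℂ)) = log ((z - x) / (z - y)) := by
  have hsub : ∀ t ∈ Set.uIcc x y, z - (t : ℂ) ≠ 0 := fun t ht => sub_ne_zero.2 (hz t ht)
  have hzx := hsub x Set.left_mem_uIcc
  have hderiv : ∀ t ∈ Set.uIcc x y,
      HasDerivAt (fun s : ℝ => log ((z - x) / (z - s))) (1 / (z - t)) t := by
    intro t ht
    have hslit : (z - x) / (z - t) ∈ slitPlane := by
      apply div_mem_slitPlane_of_notMem_segment
      rw [← ofReal_image_uIcc]
      rintro ⟨s, hs, rfl⟩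
      exact hz s (Set.uIcc_subset_uIcc_left ht hs) rfl
    have hinner : HasDerivAt (fun s : ℝ => z - (s : ℂ)) (-1) t :=
      ofRealCLM.hasDerivAt.const_sub z
    refine (((hasDerivAt_const t (z - (x : ℂ))).fun_div hinner (hsub t ht)).clog_real
      hslit).congr_deriv ?_
    have := hsub t ht
    field_simp
    ring
  have hint : IntervalIntegrable (fun t : ℝ => 1 / (z - (t : ℂ))) volume x y :=
    (continuousOn_const.div (by fun_prop) hsub).intervalIntegrable
  rw [intervalIntegral.integral_eq_sub_of_hasDerivAt hderiv hint, div_self hzx, log_one, sub_zero]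

end LogAsIntegral

section LocalEstimates

lemma norm_div_sub_div_sub_le {z s t p q : ℂ} {d : ℝ} (hd : 0 < d) (hs : d ≤ ‖z - s‖)
    (ht : d ≤ ‖z - t‖) (hq : ‖q‖ ≤ 1) :
    ‖p / (z - s) - q / (z - t)‖ ≤ ‖p - q‖ / d + ‖s - t‖ / d ^ 2 := by
  have hzs : z - s ≠ 0 := norm_pos_iff.1 (hd.trans_le hs)
  have hzt : z - t ≠ 0 := norm_pos_iff.1 (hd.trans_le ht)
  calc ‖p / (z - s) - q / (z - t)‖
      = ‖(p - q) / (z - s) + q * (s - t) / ((z - s) * (z - t))‖ := by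
        congr 1; field_simp; ring
    _ ≤ ‖p - q‖ / ‖z - s‖ + ‖q‖ * ‖s - t‖ / (‖z - s‖ * ‖z - t‖) := by
        simpa only [norm_div, norm_mul] using
          norm_add_le ((p - q) / (z - s)) (q * (s - t) / ((z - s) * (z - t)))
    _ ≤ ‖p - q‖ / d + 1 * ‖s - t‖ / (d * d) := by gcongr
    _ = ‖p - q‖ / d + ‖s - t‖ / d ^ 2 := by rw [one_mul, sq]

lemma norm_integral_sub_smul_le_s1 {E : Type*} [NormedAddCommGroup E] [NormedSpace ℝ E]
    [CompleteSpace E] {f : ℝ → E} {e : E} {x y η : ℝ} (hxy : x ≤ y)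
    (hf : ContinuousOn f (Set.Icc x y)) (hη : ∀ t ∈ Set.Icc x y, ‖f t - e‖ ≤ η) :
    ‖(∫ t in x..y, f t) - (y - x) • e‖ ≤ η * (y - x) := by
  rw [← intervalIntegral.integral_const,
    ← intervalIntegral.integral_sub (hf.intervalIntegrable_of_Icc hxy) (by simp),
    ← abs_of_nonneg (sub_nonneg.2 hxy)]
  refine intervalIntegral.norm_integral_le_of_norm_le_const fun t ht => hη t ?_
  rw [← Set.uIcc_of_le hxy]
  exact Set.uIoc_subset_uIcc ht

lemma abs_sub_sub_mul_sub_le_of_integral_eq_mul {ρ : ℝ → ℝ} {x b y w m r η : ℝ} (hxb : x ≤ b)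
    (hby : b ≤ y) (hw : w ∈ Set.Icc (0 : ℝ) 1) (hm : 0 < m) (hmr : m ≤ r)
    (hρ : ContinuousOn ρ (Set.Icc x y)) (hη : ∀ t ∈ Set.Icc x y, |ρ t - r| ≤ η)
    (hmass : ∫ t in x..b, ρ t = w * ∫ t in x..y, ρ t) :
    |(b - x) - w * (y - x)| ≤ 2 * η / m * (y - x) := by
  have hxy := hxb.trans hby
  have hη0 : 0 ≤ η := (abs_nonneg _).trans (hη x ⟨le_rfl, hxy⟩)
  have hdefect : ∀ s ∈ Set.Icc x y, |(∫ t in x..s, ρ t) - (s - x) * r| ≤ η * (y - x) := by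
    intro s hs
    have hsub : Set.Icc x s ⊆ Set.Icc x y := Set.Icc_subset_Icc_right hs.2
    calc |(∫ t in x..s, ρ t) - (s - x) * r| ≤ η * (s - x) :=
          norm_integral_sub_smul_le_s1 hs.1 (hρ.mono hsub) fun t ht => hη t (hsub ht)
      _ ≤ η * (y - x) := by
          gcongr
          exact hs.2
  rw [div_mul_eq_mul_div, le_div_iff₀ hm]
  calc |(b - x) - w * (y - x)| * m ≤ |(b - x) - w * (y - x)| * |r| := by
        gcongr
        exact hmr.trans (le_abs_self r)
    _ = |w * ((∫ t in x..y, ρ t) - (y - x) * r) - ((∫ t in x..b, ρ t) - (b - x) * r)| := by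
        rw [← abs_mul, hmass]
        congr 1
        ring
    _ ≤ |w * ((∫ t in x..y, ρ t) - (y - x) * r)| + |(∫ t in x..b, ρ t) - (b - x) * r| :=
        abs_sub _ _
    _ ≤ 1 * (η * (y - x)) + η * (y - x) := by
        rw [abs_mul, abs_of_nonneg hw.1]
        gcongr
        · exact hw.2
        · exact hdefect y ⟨hxy, le_rfl⟩
        · exact hdefect b ⟨hxb, hby⟩
    _ = 2 * η * (y - x) := by ring

lemma exists_pos_forall_le_norm_sub {E : Type*} [NormedAddCommGroup E] {s t : Set E}
    (hs : IsCompact s) (ht : IsClosed t) (hst : Disjoint s t) :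
    ∃ d > 0, ∀ x ∈ s, ∀ y ∈ t, d ≤ ‖x - y‖ := by
  obtain ⟨d, hd, h⟩ := Metric.exists_pos_forall_lt_edist hs ht hst
  refine ⟨d, hd, fun x hx y hy => ?_⟩
  have := h x hx y hy
  rw [edist_nndist, ENNReal.coe_lt_coe] at this
  rw [← dist_eq_norm]
  exact_mod_cast this.le

lemma ne_of_le_norm_sub {E : Type*} [NormedAddCommGroup E] {u w : E} {d : ℝ} (hd : 0 < d)
    (h : d ≤ ‖u - w‖) : u ≠ w :=
  sub_ne_zero.1 (norm_pos_iff.1 (hd.trans_le h))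

lemma continuousOn_div_sub {z : ℂ} {f : ℝ → ℂ} {s : Set ℝ} (hf : ContinuousOn f s)
    (hz : ∀ t ∈ s, z ≠ (t : ℂ)) : ContinuousOn (fun t : ℝ => f t / (z - (t : ℂ))) s :=
  hf.div (by fun_prop) fun t ht => sub_ne_zero.2 (hz t ht)

lemma norm_integral_div_sub_sub_smul_le {z : ℂ} {f : ℝ → ℂ} {x b y d η : ℝ} (hd : 0 < d)
    (hb : b ∈ Set.Icc x y) (hz : ∀ t ∈ Set.Icc x y, d ≤ ‖z - (t : ℂ)‖)
    (hf : ContinuousOn f (Set.Icc x y)) (hfb : ‖f b‖ ≤ 1)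
    (hη : ∀ t ∈ Set.Icc x y, ‖f t - f b‖ ≤ η) :
    ‖(∫ t in x..y, f t / (z - (t : ℂ))) - (y - x) • (f b / (z - (b : ℂ)))‖
      ≤ (η / d + (y - x) / d ^ 2) * (y - x) := by
  refine norm_integral_sub_smul_le_s1 (hb.1.trans hb.2)
    (continuousOn_div_sub hf fun t ht => ne_of_le_norm_sub hd (hz t ht)) fun t ht => ?_
  have htb : ‖(t : ℂ) - b‖ ≤ y - x := by
    rw [← ofReal_sub, norm_real]
    exact abs_sub_le_of_le_of_le ht.1 ht.2 hb.1 hb.2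
  calc ‖f t / (z - (t : ℂ)) - f b / (z - (b : ℂ))‖
      ≤ ‖f t - f b‖ / d + ‖(t : ℂ) - b‖ / d ^ 2 :=
        norm_div_sub_div_sub_le hd (hz t ht) (hz b hb) hfb
    _ ≤ η / d + (y - x) / d ^ 2 := by
        gcongr
        exact hη t ht

lemma norm_log_div_sub_smul_le {z : ℂ} {x y d : ℝ} (hd : 0 < d) (hxy : x ≤ y)
    (hz : ∀ t ∈ Set.Icc x y, d ≤ ‖z - (t : ℂ)‖) :
    ‖log ((z - x) / (z - y)) - (y - x) • (1 / (z - (y : ℂ)))‖ ≤ (y - x) / d ^ 2 * (y - x) := by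
  rw [← integral_one_div_sub_eq_log fun t ht =>
    ne_of_le_norm_sub hd (hz t (Set.uIcc_of_le hxy ▸ ht))]
  simpa only [zero_div, zero_add] using
    norm_integral_div_sub_sub_smul_le (f := fun _ => 1) (η := 0) hd ⟨hxy, le_rfl⟩ hz
      continuousOn_const norm_one.le (by simp)

lemma norm_log_div_sub_integral_le {z : ℂ} {ρ v : ℝ → ℝ} {x b y d m η : ℝ} (hd : 0 < d)
    (hm : 0 < m) (hb : b ∈ Set.Icc x y) (hz : ∀ t ∈ Set.Icc x y, d ≤ ‖z - (t : ℂ)‖)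
    (hρ : ContinuousOn ρ (Set.Icc x y)) (hv : ContinuousOn v (Set.Icc x y)) (hmρ : m ≤ ρ b)
    (hvb : v b ∈ Set.Icc (0 : ℝ) 1) (hρη : ∀ t ∈ Set.Icc x y, |ρ t - ρ b| ≤ η)
    (hvη : ∀ t ∈ Set.Icc x y, |v t - v b| ≤ η) (hη : y - x ≤ η)
    (hmass : ∫ t in x..b, ρ t = v b * ∫ t in x..y, ρ t) :
    ‖log ((z - x) / (z - b)) - ∫ t in x..y, (v t : ℂ) / (z - (t : ℂ))‖
      ≤ (2 / d ^ 2 + 1 / d + 2 / (m * d)) * η * (y - x) := by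
  have hzb := hz b hb
  obtain ⟨hxb, hby⟩ := hb
  have hη0 : 0 ≤ η := by linarith
  have hlog : ‖log ((z - x) / (z - b)) - (b - x) • (1 / (z - (b : ℂ)))‖
      ≤ η / d ^ 2 * (y - x) := by
    refine (norm_log_div_sub_smul_le hd hxb fun t ht => hz t ⟨ht.1, ht.2.trans hby⟩).trans ?_
    gcongr
    linarith
  have hlength : ‖((b - x) - v b * (y - x)) • (1 / (z - (b : ℂ)))‖
      ≤ 2 * η / m * (y - x) * (1 / d) := by
    rw [norm_smul, norm_div, norm_one]
    have := abs_sub_sub_mul_sub_le_of_integral_eq_mul hxb hby hvb hm hmρ hρ hρη hmass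
    exact mul_le_mul this (by gcongr) (by positivity) ((abs_nonneg _).trans this)
  have hintegral : ‖(∫ t in x..y, (v t : ℂ) / (z - (t : ℂ)))
      - (y - x) • ((v b : ℂ) / (z - (b : ℂ)))‖ ≤ (η / d + η / d ^ 2) * (y - x) := by
    refine (norm_integral_div_sub_sub_smul_le (f := fun t => (v t : ℂ)) (b := b) (η := η) hd
      ⟨hxb, hby⟩ hz (continuous_ofReal.comp_continuousOn hv) ?_ fun t ht => ?_).trans ?_
    · rw [norm_real, Real.norm_of_nonneg hvb.1]
      exact hvb.2
    · rw [← ofReal_sub, norm_real]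
      exact hvη t ht
    · gcongr
      linarith
  calc ‖log ((z - x) / (z - b)) - ∫ t in x..y, (v t : ℂ) / (z - (t : ℂ))‖
      = ‖(log ((z - x) / (z - b)) - (b - x) • (1 / (z - (b : ℂ))))
          + ((b - x) - v b * (y - x)) • (1 / (z - (b : ℂ)))
          - ((∫ t in x..y, (v t : ℂ) / (z - (t : ℂ)))
            - (y - x) • ((v b : ℂ) / (z - (b : ℂ))))‖ := by
        congr 1
        simp only [real_smul]
        push_cast
        ring
    _ ≤ η / d ^ 2 * (y - x) + 2 * η / m * (y - x) * (1 / d)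
          + (η / d + η / d ^ 2) * (y - x) :=
        norm_sub_le_of_le (norm_add_le_of_le hlog hlength) hintegral
    _ = (2 / d ^ 2 + 1 / d + 2 / (m * d)) * η * (y - x) := by
        field_simp
        ring

end LocalEstimates

section Subdivisions

variable {ρ v : ℝ → ℝ} {p q d δ ε : ℝ}

lemma exists_forall_norm_log_div_sub_integral_le (hρ : ContinuousOn ρ (Set.Icc p q))
    (hρpos : ∀ t ∈ Set.Icc p q, 0 < ρ t) (hv : ContinuousOn v (Set.Icc p q))
    (hv01 : ∀ t ∈ Set.Icc p q, v t ∈ Set.Icc (0 : ℝ) 1) (hd : 0 < d) (hε : 0 < ε) :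
    ∃ δ > 0, ∀ z : ℂ, (∀ t ∈ Set.Icc p q, d ≤ ‖z - (t : ℂ)‖) →
      ∀ x ∈ Set.Icc p q, ∀ y ∈ Set.Icc p q, ∀ b ∈ Set.Icc x y, y - x ≤ δ →
      ∫ t in x..b, ρ t = v b * ∫ t in x..y, ρ t →
      ‖log ((z - x) / (z - b)) - ∫ t in x..y, (v t : ℂ) / (z - (t : ℂ))‖ ≤ ε * (y - x) := by
  obtain ⟨m, hm, hmρ⟩ := isCompact_Icc.exists_forall_le' hρ hρpos
  set C := 2 / d ^ 2 + 1 / d + 2 / (m * d)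
  have hη : 0 < ε / C := by positivity
  obtain ⟨δρ, hδρ, hρη⟩ := Metric.uniformContinuousOn_iff_le.1
    (isCompact_Icc.uniformContinuousOn_of_continuous hρ) _ hη
  obtain ⟨δv, hδv, hvη⟩ := Metric.uniformContinuousOn_iff_le.1
    (isCompact_Icc.uniformContinuousOn_of_continuous hv) _ hη
  refine ⟨min (min δρ δv) (ε / C), by positivity, fun z hz x hx y hy b hb hxy hmass => ?_⟩
  simp only [le_min_iff] at hxy
  have hsub : Set.Icc x y ⊆ Set.Icc p q := Set.Icc_subset_Icc hx.1 hy.2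
  have hbI := hsub hb
  have hclose : ∀ t ∈ Set.Icc x y, dist t b ≤ y - x := fun t ht => Real.dist_le_of_mem_Icc ht hb
  refine (norm_log_div_sub_integral_le hd hm hb (fun t ht => hz t (hsub ht)) (hρ.mono hsub)
    (hv.mono hsub) (hmρ b hbI) (hv01 b hbI)
    (fun t ht => hρη t (hsub ht) b hbI ((hclose t ht).trans hxy.1.1))
    (fun t ht => hvη t (hsub ht) b hbI ((hclose t ht).trans hxy.1.2)) hxy.2 hmass).trans_eq ?_
  rw [mul_div_cancel₀ _ (by positivity)]

lemma norm_sum_sub_integral_le_of_forall {E : Type*} [NormedAddCommGroup E] [NormedSpace ℝ E]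
    {f : ℝ → E} {u : ℕ → E} {c : ℕ → ℝ} {m n : ℕ} (hmn : m ≤ n)
    (hf : ∀ k ∈ Set.Ico m n, IntervalIntegrable f volume (c k) (c (k + 1)))
    (hu : ∀ k ∈ Set.Ico m n, ‖u k - ∫ t in c k..c (k + 1), f t‖ ≤ ε * (c (k + 1) - c k)) :
    ‖∑ k ∈ Finset.Ico m n, u k - ∫ t in c m..c n, f t‖ ≤ ε * (c n - c m) := by
  rw [← intervalIntegral.sum_integral_adjacent_intervals_Ico hmn hf, ← Finset.sum_sub_distrib,
    ← Finset.sum_Ico_sub c hmn, Finset.mul_sum]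
  exact norm_sum_le_of_le _ fun k hk => hu k (Finset.mem_Ico.1 hk)

/-- A subdivision `p = c m ≤ ⋯ ≤ c n = q` of mesh at most `δ` in which every cell
`[c k, c (k + 1)]` except the first carries a tag `b k` that cuts off from the left the fraction
`v (b k)` of the `ρ`-mass of the cell. The first cell has no tag because the products `B_g` have
no factor with `j = 1`. -/
structure IsProportionalSubdivision (ρ v : ℝ → ℝ) (p q δ : ℝ) (m n : ℕ) (c b : ℕ → ℝ) :
    Prop where
  lt : m < n
  left_eq : c m = p
  right_eq : c n = q
  monotoneOn : MonotoneOn c (Set.Icc m n)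
  mesh_le : ∀ k ∈ Set.Ico m n, c (k + 1) - c k ≤ δ
  tag_mem : ∀ k ∈ Set.Ico (m + 1) n, b k ∈ Set.Icc (c k) (c (k + 1))
  mass_eq : ∀ k ∈ Set.Ico (m + 1) n,
    ∫ t in c k..b k, ρ t = v (b k) * ∫ t in c k..c (k + 1), ρ t

namespace IsProportionalSubdivision

variable {m n : ℕ} {c b : ℕ → ℝ}

lemma le_succ (h : IsProportionalSubdivision ρ v p q δ m n c b) {k : ℕ} (hk : k ∈ Set.Ico m n) :
    c k ≤ c (k + 1) :=
  h.monotoneOn ⟨hk.1, hk.2.le⟩ ⟨by grind, hk.2⟩ k.le_succ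

lemma node_mem (h : IsProportionalSubdivision ρ v p q δ m n c b) {k : ℕ}
    (hk : k ∈ Set.Icc m n) : c k ∈ Set.Icc p q := by
  rw [← h.left_eq, ← h.right_eq]
  exact ⟨h.monotoneOn ⟨le_rfl, h.lt.le⟩ hk hk.1, h.monotoneOn hk ⟨h.lt.le, le_rfl⟩ hk.2⟩

lemma Icc_subset (h : IsProportionalSubdivision ρ v p q δ m n c b) {k : ℕ}
    (hk : k ∈ Set.Ico m n) : Set.Icc (c k) (c (k + 1)) ⊆ Set.Icc p q :=
  Set.Icc_subset_Icc (h.node_mem ⟨hk.1, hk.2.le⟩).1 (h.node_mem ⟨by grind, hk.2⟩).2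

lemma norm_sum_sub_integral_le {E : Type*} [NormedAddCommGroup E] [NormedSpace ℝ E]
    {f : ℝ → E} {u : ℕ → E} {C : ℝ} (h : IsProportionalSubdivision ρ v p q δ m n c b)
    (hε : 0 ≤ ε) (hf : ContinuousOn f (Set.Icc p q)) (hfC : ∀ t ∈ Set.Icc p q, ‖f t‖ ≤ C)
    (hu : ∀ k ∈ Set.Ico (m + 1) n,
      ‖u k - ∫ t in c k..c (k + 1), f t‖ ≤ ε * (c (k + 1) - c k)) :
    ‖∑ k ∈ Finset.Ico (m + 1) n, u k - ∫ t in p..q, f t‖ ≤ ε * (q - p) + C * δ := by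
  have hm : m ∈ Set.Ico m n := ⟨le_rfl, h.lt⟩
  have hp : c (m + 1) ∈ Set.Icc p q := h.node_mem ⟨m.le_succ, h.lt⟩
  have hC : 0 ≤ C := (norm_nonneg _).trans (hfC _ hp)
  have hint : ∀ k ∈ Set.Ico m n, IntervalIntegrable f volume (c k) (c (k + 1)) := fun k hk =>
    (hf.mono (h.Icc_subset hk)).intervalIntegrable_of_Icc (h.le_succ hk)
  have hfirst : ‖∫ t in p..c (m + 1), f t‖ ≤ C * δ := by
    have hle := h.le_succ hm
    have hmesh := h.mesh_le m hm
    rw [h.left_eq] at hle hmesh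
    refine (intervalIntegral.norm_integral_le_of_norm_le_const (C := C) fun t ht => ?_).trans ?_
    · rw [Set.uIoc_of_le hle] at ht
      exact hfC t ⟨ht.1.le, ht.2.trans hp.2⟩
    · rw [abs_of_nonneg (sub_nonneg.2 hle)]
      gcongr
  have hrest : ‖∑ k ∈ Finset.Ico (m + 1) n, u k - ∫ t in c (m + 1)..q, f t‖ ≤ ε * (q - p) := by
    rw [← h.right_eq]
    refine (norm_sum_sub_integral_le_of_forall h.lt
      (fun k hk => hint k ⟨m.le_succ.trans hk.1, hk.2⟩) hu).trans ?_
    rw [h.right_eq]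
    gcongr
    exact hp.1
  rw [← intervalIntegral.integral_add_adjacent_intervals (b := c (m + 1))
    ((hf.mono (Set.Icc_subset_Icc_right hp.2)).intervalIntegrable_of_Icc hp.1)
    ((hf.mono (Set.Icc_subset_Icc_left hp.1)).intervalIntegrable_of_Icc hp.2),
    add_comm (∫ t in p..c (m + 1), f t), sub_add_eq_sub_sub]
  exact norm_sub_le_of_le hrest hfirst

end IsProportionalSubdivision

theorem exists_forall_norm_sum_log_div_sub_integral_le (hpq : p ≤ q)
    (hρ : ContinuousOn ρ (Set.Icc p q)) (hρpos : ∀ t ∈ Set.Icc p q, 0 < ρ t)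
    (hv : ContinuousOn v (Set.Icc p q)) (hv01 : ∀ t ∈ Set.Icc p q, v t ∈ Set.Icc (0 : ℝ) 1)
    (hd : 0 < d) (hε : 0 < ε) :
    ∃ δ > 0, ∀ z : ℂ, (∀ t ∈ Set.Icc p q, d ≤ ‖z - (t : ℂ)‖) → ∀ (m n : ℕ) (c b : ℕ → ℝ),
      IsProportionalSubdivision ρ v p q δ m n c b →
      ‖∑ k ∈ Finset.Ico (m + 1) n, log ((z - c k) / (z - b k))
        - ∫ t in p..q, (v t : ℂ) / (z - (t : ℂ))‖ ≤ ε := by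
  have hlen : 0 < q - p + 1 := by linarith
  obtain ⟨δ, hδ, hlocal⟩ := exists_forall_norm_log_div_sub_integral_le hρ hρpos hv hv01 hd
    (div_pos hε hlen)
  refine ⟨min δ (ε / (q - p + 1) * d), by positivity, fun z hz m n c b h => ?_⟩
  have hcont : ContinuousOn (fun t : ℝ => (v t : ℂ) / (z - (t : ℂ))) (Set.Icc p q) :=
    continuousOn_div_sub (continuous_ofReal.comp_continuousOn hv)
      fun t ht => ne_of_le_norm_sub hd (hz t ht)
  have hbound : ∀ t ∈ Set.Icc p q, ‖(v t : ℂ) / (z - (t : ℂ))‖ ≤ 1 / d := by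
    intro t ht
    rw [norm_div, norm_real, Real.norm_of_nonneg (hv01 t ht).1]
    exact div_le_div₀ zero_le_one (hv01 t ht).2 hd (hz t ht)
  calc _ ≤ ε / (q - p + 1) * (q - p) + 1 / d * min δ (ε / (q - p + 1) * d) := by
        refine h.norm_sum_sub_integral_le (by positivity) hcont hbound fun k hk => ?_
        have hk' : k ∈ Set.Ico m n := ⟨m.le_succ.trans hk.1, hk.2⟩
        exact hlocal z hz _ (h.node_mem ⟨hk'.1, hk'.2.le⟩) _
          (h.node_mem ⟨hk'.1.trans k.le_succ, hk'.2⟩) _ (h.tag_mem k hk)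
          ((h.mesh_le k hk').trans (min_le_left _ _)) (h.mass_eq k hk)
    _ ≤ ε / (q - p + 1) * (q - p) + 1 / d * (ε / (q - p + 1) * d) := by
        gcongr
        exact min_le_right _ _
    _ = ε := by
        field_simp

end Subdivisions

section Quantiles

variable {ρ v σ : ℝ → ℝ} {p q : ℝ}

lemma integral_eq_sub_of_forall_eq_integral (hρ : ContinuousOn ρ (Set.Icc p q))
    (hσ : ∀ t, σ t = ∫ y in p..t, ρ y) {s t : ℝ} (hs : s ∈ Set.Icc p q)
    (ht : t ∈ Set.Icc p q) : ∫ y in s..t, ρ y = σ t - σ s := by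
  have hint : ∀ t ∈ Set.Icc p q, IntervalIntegrable ρ volume p t := fun t ht =>
    (hρ.mono (Set.Icc_subset_Icc_right ht.2)).intervalIntegrable_of_Icc ht.1
  rw [hσ, hσ, intervalIntegral.integral_interval_sub_left (hint t ht) (hint s hs)]

lemma mul_sub_le_sub_of_forall_eq_integral {m : ℝ} (hρ : ContinuousOn ρ (Set.Icc p q))
    (hm : ∀ t ∈ Set.Icc p q, m ≤ ρ t) (hσ : ∀ t, σ t = ∫ y in p..t, ρ y) {s t : ℝ}
    (hs : s ∈ Set.Icc p q) (ht : t ∈ Set.Icc p q) (hst : s ≤ t) :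
    m * (t - s) ≤ σ t - σ s := by
  have hsub : Set.Icc s t ⊆ Set.Icc p q := Set.Icc_subset_Icc hs.1 ht.2
  rw [← integral_eq_sub_of_forall_eq_integral hρ hσ hs ht, mul_comm, ← smul_eq_mul,
    ← intervalIntegral.integral_const]
  exact intervalIntegral.integral_mono_on hst (by simp)
    ((hρ.mono hsub).intervalIntegrable_of_Icc hst) fun y hy => hm y (hsub hy)

lemma strictMonoOn_of_forall_eq_integral {m : ℝ} (hρ : ContinuousOn ρ (Set.Icc p q))
    (hm0 : 0 < m) (hm : ∀ t ∈ Set.Icc p q, m ≤ ρ t) (hσ : ∀ t, σ t = ∫ y in p..t, ρ y) :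
    StrictMonoOn σ (Set.Icc p q) := fun _ hs _ ht hst =>
  sub_pos.1 ((mul_pos hm0 (sub_pos.2 hst)).trans_le
    (mul_sub_le_sub_of_forall_eq_integral hρ hm hσ hs ht hst.le))

lemma exists_quantiles (hpq : p ≤ q) (hρ : ContinuousOn ρ (Set.Icc p q))
    (hσ : ∀ t, σ t = ∫ y in p..t, ρ y) (hσq : σ q = 1) (g : ℕ) :
    ∃ c : ℕ → ℝ, ∀ j ∈ Set.Icc 1 (g + 1), c j ∈ Set.Icc p q ∧ σ (c j) = ((j : ℝ) - 1) / g := by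
  have hσcont : ContinuousOn σ (Set.Icc p q) := by
    rw [funext hσ, ← Set.uIcc_of_le hpq]
    exact intervalIntegral.continuousOn_primitive_interval
      (Set.uIcc_of_le hpq ▸ hρ.integrableOn_Icc)
  have hσp : σ p = 0 := by rw [hσ, intervalIntegral.integral_same]
  have hquantile : ∀ j : ℕ, ∃ t, j ∈ Set.Icc 1 (g + 1) →
      t ∈ Set.Icc p q ∧ σ t = ((j : ℝ) - 1) / g := by
    intro j
    by_cases hj : j ∈ Set.Icc 1 (g + 1)
    · have hj1 : (1 : ℝ) ≤ j := by exact_mod_cast hj.1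
      have hjg : (j : ℝ) ≤ g + 1 := by exact_mod_cast hj.2
      have hmem : ((j : ℝ) - 1) / g ∈ Set.Icc (σ p) (σ q) := by
        rw [hσp, hσq]
        exact ⟨div_nonneg (by linarith) g.cast_nonneg,
          div_le_one_of_le₀ (by linarith) g.cast_nonneg⟩
      obtain ⟨t, ht, hσt⟩ := intermediate_value_Icc hpq hσcont hmem
      exact ⟨t, fun _ => ⟨ht, hσt⟩⟩
    · exact ⟨p, fun h => absurd h hj⟩
  choose c hc using hquantile
  exact ⟨c, hc⟩

lemma mem_Icc_of_eq_add_mul_sub {s : Set ℝ} (hσ : StrictMonoOn σ s) {x y b w : ℝ}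
    (hx : x ∈ s) (hy : y ∈ s) (hb : b ∈ s) (hw : w ∈ Set.Icc (0 : ℝ) 1) (hxy : x ≤ y)
    (hσb : σ b = σ x + w * (σ y - σ x)) : b ∈ Set.Icc x y := by
  have hσxy : 0 ≤ σ y - σ x := sub_nonneg.2 ((hσ.le_iff_le hx hy).2 hxy)
  constructor
  · rw [← hσ.le_iff_le hx hb, hσb]
    linarith [mul_nonneg hw.1 hσxy]
  · rw [← hσ.le_iff_le hb hy, hσb]
    linarith [mul_le_of_le_one_left hσxy hw.2]

lemma isProportionalSubdivision_of_quantiles {m δ : ℝ} {g : ℕ} {b c : ℕ → ℝ} (hg : 0 < g)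
    (hpq : p ≤ q) (hρ : ContinuousOn ρ (Set.Icc p q)) (hm0 : 0 < m)
    (hm : ∀ t ∈ Set.Icc p q, m ≤ ρ t) (hσ : ∀ t, σ t = ∫ y in p..t, ρ y) (hσq : σ q = 1)
    (hv01 : ∀ t ∈ Set.Icc p q, v t ∈ Set.Icc (0 : ℝ) 1) (hδ : 1 / g ≤ m * δ)
    (hc : ∀ j ∈ Set.Icc 1 (g + 1), c j ∈ Set.Icc p q ∧ σ (c j) = ((j : ℝ) - 1) / g)
    (hb : ∀ j ∈ Set.Ico 2 (g + 1), b j ∈ Set.Icc p q ∧ σ (b j) = ((j : ℝ) - 1 + v (b j)) / g) :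
    IsProportionalSubdivision ρ v p q δ 1 (g + 1) c b := by
  have hσmono := strictMonoOn_of_forall_eq_integral hρ hm0 hm hσ
  have hσp : σ p = 0 := by rw [hσ, intervalIntegral.integral_same]
  have hcell : ∀ k ∈ Set.Ico 1 (g + 1), c k ∈ Set.Icc p q ∧ c (k + 1) ∈ Set.Icc p q ∧
      σ (c (k + 1)) - σ (c k) = 1 / g := by
    intro k hk
    obtain ⟨hck, hσk⟩ := hc k ⟨hk.1, hk.2.le⟩
    obtain ⟨hck', hσk'⟩ := hc (k + 1) ⟨hk.1.trans k.le_succ, hk.2⟩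
    refine ⟨hck, hck', ?_⟩
    rw [hσk, hσk']
    push_cast
    ring
  have hle : ∀ k ∈ Set.Ico 1 (g + 1), c k ≤ c (k + 1) := by
    intro k hk
    obtain ⟨hck, hck', hσk⟩ := hcell k hk
    rw [← hσmono.le_iff_le hck hck', ← sub_nonneg, hσk]
    positivity
  have htag : ∀ k ∈ Set.Ico 2 (g + 1),
      σ (b k) = σ (c k) + v (b k) * (σ (c (k + 1)) - σ (c k)) := by
    intro k hk
    rw [(hcell k ⟨by grind, hk.2⟩).2.2, (hb k hk).2, (hc k ⟨by grind, hk.2.le⟩).2]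
    ring
  refine ⟨by omega, ?_, ?_, ?_, fun k hk => ?_, fun k hk => ?_, fun k hk => ?_⟩
  · obtain ⟨hc1, hσ1⟩ := hc 1 ⟨le_rfl, by omega⟩
    exact hσmono.injOn hc1 ⟨le_rfl, hpq⟩ (by simp [hσ1, hσp])
  · obtain ⟨hcg, hσg⟩ := hc (g + 1) ⟨by omega, le_rfl⟩
    exact hσmono.injOn hcg ⟨hpq, le_rfl⟩ (by simp [hσg, hσq, hg.ne'])
  · exact monotoneOn_of_le_add_one Set.ordConnected_Icc fun k _ hk hk' =>
      hle k ⟨hk.1, hk'.2⟩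
  · obtain ⟨hck, hck', hσk⟩ := hcell k hk
    have := mul_sub_le_sub_of_forall_eq_integral hρ hm hσ hck hck' (hle k hk)
    exact le_of_mul_le_mul_left (this.trans (hσk.trans_le hδ)) hm0
  · have hk' : k ∈ Set.Ico 1 (g + 1) := ⟨by grind, hk.2⟩
    obtain ⟨hck, hck', -⟩ := hcell k hk'
    exact mem_Icc_of_eq_add_mul_sub hσmono hck hck' (hb k hk).1 (hv01 _ (hb k hk).1) (hle k hk')
      (htag k hk)
  · obtain ⟨hck, hck', -⟩ := hcell k ⟨by grind, hk.2⟩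
    rw [integral_eq_sub_of_forall_eq_integral hρ hσ hck (hb k hk).1,
      integral_eq_sub_of_forall_eq_integral hρ hσ hck hck', htag k hk, add_sub_cancel_left]

end Quantiles

theorem stmt_1_general
    (β₁ α : ℝ) (hβα : β₁ ≤ α)
    (ρ : ℝ → ℝ) (hρc : ContinuousOn ρ (Set.Icc β₁ α))
    (hρpos : ∀ y ∈ Set.Icc β₁ α, 0 < ρ y)
    (hρint : (∫ y in β₁..α, ρ y) = 1)
    (σ : ℝ → ℝ) (hσ : ∀ t, σ t = ∫ y in β₁..t, ρ y)
    (v : ℝ → ℝ) (hvc : ContinuousOn v (Set.Icc β₁ α))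
    (hvrange : ∀ y ∈ Set.Icc β₁ α, v y ∈ Set.Icc (0 : ℝ) 1)
    (a b : ℕ → ℕ → ℝ)
    (hmem : ∀ g, 2 ≤ g → ∀ j ∈ Finset.Icc 2 g,
      a g j ∈ Set.Icc β₁ α ∧ b g j ∈ Set.Icc β₁ α)
    (hσa : ∀ g, 2 ≤ g → ∀ j ∈ Finset.Icc 2 g, σ (a g j) = ((j : ℝ) - 1) / g)
    (hσb : ∀ g, 2 ≤ g → ∀ j ∈ Finset.Icc 2 g,
      σ (b g j) = ((j : ℝ) - 1 + v (b g j)) / g)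
    (K : Set ℂ) {d : ℝ} (hd : 0 < d)
    (hK : ∀ z ∈ K, ∀ t ∈ Set.Icc β₁ α, d ≤ ‖z - (t : ℂ)‖) :
    TendstoUniformlyOn
      (fun g z => ∑ j ∈ Finset.Icc 2 g, Complex.log ((z - (a g j : ℂ)) / (z - (b g j : ℂ))))
      (fun z => ∫ y in β₁..α, (v y : ℂ) / (z - (y : ℂ)))
      atTop K := by
  obtain ⟨m, hm0, hm⟩ := isCompact_Icc.exists_forall_le' hρc hρpos
  have hinj := (strictMonoOn_of_forall_eq_integral hρc hm0 hm hσ).injOn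
  have hσα : σ α = 1 := (hσ α).trans hρint
  rw [Metric.tendstoUniformlyOn_iff]
  intro ε hε
  obtain ⟨δ, hδ, hsum⟩ :=
    exists_forall_norm_sum_log_div_sub_integral_le hβα hρc hρpos hvc hvrange hd (half_pos hε)
  filter_upwards [eventually_ge_atTop 2, tendsto_one_div_atTop_nhds_zero_nat.eventually_le_const
    (mul_pos hm0 hδ)] with g hg hgδ z hz
  simp only [← Finset.Ico_add_one_right_eq_Icc, Finset.mem_Ico] at hmem hσa hσb ⊢
  obtain ⟨c, hc⟩ := exists_quantiles hβα hρc hσ hσα g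
  have hac : ∀ j ∈ Finset.Ico 2 (g + 1), a g j = c j := fun j hj => by
    rw [Finset.mem_Ico] at hj
    obtain ⟨hcj, hσc⟩ := hc j ⟨by omega, hj.2.le⟩
    exact hinj (hmem g hg j hj).1 hcj ((hσa g hg j hj).trans hσc.symm)
  have hsubdiv := isProportionalSubdivision_of_quantiles (by omega) hβα hρc hm0 hm hσ hσα hvrange
    hgδ hc fun j hj => ⟨(hmem g hg j hj).2, hσb g hg j hj⟩
  rw [dist_comm, dist_eq_norm, Finset.sum_congr rfl fun j hj => by rw [hac j hj]]
  exact (hsum z (hK z hz) 1 (g + 1) c (b g) hsubdiv).trans_lt (half_lt_self hε)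

/-- With the setup of Statement 0, suppose in addition that the numbers
`w g j` are given by `w g j = v (b g j)` for a continuous `v : [β₁, α] → (0,1)` (so that
`σ (b g j) = (j-1+v(b g j))/g`).  Then for every compact `K ⊆ ℂ ∖ [β₁, α]`,
`∑_{j=2}^g Log((z - a g j)/(z - b g j))` converges to `∫_{β₁}^α v(y)/(z - y) dy`
uniformly on `K` as `g → ∞`. -/
theorem stmt_1
    (β₁ α : ℝ) (hβ₁ : 0 < β₁) (hβα : β₁ < α)
    (ρ : ℝ → ℝ) (hρc : ContinuousOn ρ (Set.Icc β₁ α))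
    (hρpos : ∀ y ∈ Set.Icc β₁ α, 0 < ρ y)
    (hρint : (∫ y in β₁..α, ρ y) = 1)
    (σ : ℝ → ℝ) (hσ : ∀ t, σ t = ∫ y in β₁..t, ρ y)
    (v : ℝ → ℝ) (hvc : ContinuousOn v (Set.Icc β₁ α))
    (hvrange : ∀ y ∈ Set.Icc β₁ α, v y ∈ Set.Ioo (0:ℝ) 1)
    (a b : ℕ → ℕ → ℝ)
    (hmem : ∀ g, 2 ≤ g → ∀ j ∈ Finset.Icc 2 g,
      a g j ∈ Set.Icc β₁ α ∧ b g j ∈ Set.Icc β₁ α)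
    (hσa : ∀ g, 2 ≤ g → ∀ j ∈ Finset.Icc 2 g, σ (a g j) = ((j : ℝ) - 1) / g)
    (hσb : ∀ g, 2 ≤ g → ∀ j ∈ Finset.Icc 2 g,
      σ (b g j) = ((j : ℝ) - 1 + v (b g j)) / g)
    (K : Set ℂ) (hK : IsCompact K)
    (hKΩ : K ⊆ ((fun x : ℝ => (x : ℂ)) '' Set.Icc β₁ α)ᶜ) :
    TendstoUniformlyOn
      (fun g z => ∑ j ∈ Finset.Icc 2 g, Complex.log ((z - (a g j : ℂ)) / (z - (b g j : ℂ))))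
      (fun z => ∫ y in β₁..α, (v y : ℂ) / (z - (y : ℂ)))
      atTop K := by
  obtain ⟨d, hd, hKd⟩ := exists_pos_forall_le_norm_sub hK
    (isCompact_Icc.image continuous_ofReal).isClosed (Set.subset_compl_iff_disjoint_right.1 hKΩ)
  exact stmt_1_general β₁ α hβα.le ρ hρc hρpos hρint σ hσ v hvc
    (fun y hy => Set.Ioo_subset_Icc_self (hvrange y hy)) a b hmem hσa hσb K hd
    fun z hz t ht => hKd z hz t ⟨t, ht, rfl⟩
end

section
/- Let ρ > 1 and let B_ρ = { (z + z^{−1})/2 : z ∈ ℂ, ρ^{−1} < |z| < ρ } be the open Bernstein ellipse with parameter ρ (an open neighborhood of [−1,1]). Suppose f : B_ρ → ℂ is analytic with M = sup_{z∈B_ρ} |f(z)| < ∞. Define the Chebyshev coefficients a_0 = (1/π) ∫_{−1}^{1} f(y)/√(1−y²) dy and a_k = (2/π) ∫_{−1}^{1} f(y) T_k(y)/√(1−y²) dy for k ≥ 1. Then |a_k| ≤ 2 M ρ^{−k} for all k ≥ 0, and for every m ≥ 0, max_{y∈[−1,1]} | f(y) − Σ_{k=0}^{m} a_k T_k(y)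 | ≤ 4 M ρ^{−m}/(ρ − 1). -/
open Complex Filter MeasureTheory

/-!
The Joukowski map `J z = (z + z⁻¹) / 2` sends the unit circle onto `[-1, 1]` by `z ↦ re z`, and
`2 T_n (re z) = z ^ n + z ^ (-n)` there. Since `f ∘ J` is invariant under `z ↦ z⁻¹`, the Chebyshev
coefficients of `f` are therefore, up to the factor `2`, the Laurent coefficients of `f ∘ J` on the
annulus `ρ⁻¹ < ‖z‖ < ρ`, and pushing the contour out to `‖z‖ = ρ` bounds them by `M * ρ ^ (-k)`.
With summable coefficients the Fourier series of `f ∘ J` converges pointwise on the unit circle;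
folding the terms of index `n` and `-n` together turns it into the Chebyshev series of `f`, whose
tail is dominated by a geometric series.
-/

section
open Metric Set
open Real (circleAverage)
open Polynomial.Chebyshev (T)
open scoped Real Topology

variable {E : Type*} [NormedAddCommGroup E] [NormedSpace ℂ E]
  {F : Type*} [NormedAddCommGroup F] [NormedSpace ℝ F]

theorem norm_circleAverage_le_of_norm_le_const {f : ℂ → F} {c : ℂ} {R C : ℝ}
    (hf : ∀ z ∈ sphere c |R|, ‖f z‖ ≤ C) : ‖circleAverage f c R‖ ≤ C := by
  have hint : ‖∫ θ in 0..2 * π, f (circleMap c R θ)‖ ≤ C * |2 * π - 0| :=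
    intervalIntegral.norm_integral_le_of_norm_le_const fun θ _ ↦ hf _ (circleMap_mem_sphere' c R θ)
  rw [sub_zero, abs_of_pos Real.two_pi_pos] at hint
  rw [Real.circleAverage_def, norm_smul, Real.norm_of_nonneg (by positivity),
    inv_mul_le_iff₀ Real.two_pi_pos]
  linarith

theorem circleAverage_eq_of_differentiableOn_annulus {f : ℂ → E} {c : ℂ} {r R s t : ℝ}
    (hr : 0 ≤ r) (hf : DifferentiableOn ℂ f (ball c R \ closedBall c r))
    (hs : s ∈ Ioo r R) (ht : t ∈ Ioo r R) : circleAverage f c s = circleAverage f c t := by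
  wlog hst : s ≤ t generalizing s t
  · exact (this ht hs (le_of_not_ge hst)).symm
  have hs0 : 0 < s := hr.trans_lt hs.1
  have hsub : closedBall c t \ ball c s ⊆ ball c R \ closedBall c r :=
    sdiff_subset_sdiff (closedBall_subset_ball ht.2) (closedBall_subset_ball hs.1)
  rw [Real.circleAverage_eq_circleIntegral hs0.ne',
    Real.circleAverage_eq_circleIntegral (hs0.trans_le hst).ne',
    circleIntegral_sub_center_inv_smul_eq_of_differentiable_on_annulus_off_countable hs0 hst
      countable_empty (hf.continuousOn.mono hsub) fun z hz ↦ ?_]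
  exact hf.differentiableAt <| (isOpen_ball.sdiff isClosed_closedBall).mem_nhds <|
    hsub (sdiff_subset_sdiff ball_subset_closedBall ball_subset_closedBall hz.1)

theorem norm_circleAverage_zpow_smul_le {f : ℂ → E} {c : ℂ} {r R s M : ℝ} (hr : 0 ≤ r)
    (hf : DifferentiableOn ℂ f (ball c R \ closedBall c r))
    (hM : ∀ z ∈ ball c R \ closedBall c r, ‖f z‖ ≤ M) (hs : s ∈ Ioo r R) (n : ℤ) :
    ‖circleAverage (fun z ↦ (z - c) ^ n • f z) c s‖ ≤ M * R ^ n := by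
  have hR : 0 < R := hr.trans_lt (hs.1.trans hs.2)
  have hdiff : DifferentiableOn ℂ (fun z ↦ (z - c) ^ n • f z) (ball c R \ closedBall c r) := by
    refine .smul (.zpow (by fun_prop) (.inl fun z hz ↦ sub_ne_zero.2 ?_)) hf
    rintro rfl
    exact hz.2 (mem_closedBall_self hr)
  have hbound : ∀ t ∈ Ioo r R,
      ‖circleAverage (fun z ↦ (z - c) ^ n • f z) c s‖ ≤ M * t ^ n := by
    intro t ht
    rw [circleAverage_eq_of_differentiableOn_annulus hr hdiff hs ht]
    refine norm_circleAverage_le_of_norm_le_const fun z hz ↦ ?_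
    rw [abs_of_pos (hr.trans_lt ht.1), mem_sphere] at hz
    rw [norm_smul, norm_zpow, ← dist_eq_norm, hz, mul_comm]
    have : ‖f z‖ ≤ M := hM z ⟨by simpa [hz] using ht.2, by simpa [hz] using ht.1⟩
    have : 0 < t := hr.trans_lt ht.1
    gcongr
  have hlim : Tendsto (fun t : ℝ ↦ M * t ^ n) (𝓝[<] R) (𝓝 (M * R ^ n)) :=
    ((continuousAt_zpow₀ R n (.inl hR.ne')).tendsto.const_mul M).mono_left nhdsWithin_le_nhds
  refine ge_of_tendsto hlim ?_
  filter_upwards [Ioo_mem_nhdsLT (hs.1.trans hs.2)] with t ht using hbound t ht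

theorem fourierCoeff_comp_toCircle {p : ℝ} [hp : Fact (0 < p)] (f : ℂ → E) (n : ℤ) :
    fourierCoeff (fun t : AddCircle p ↦ f t.toCircle) n =
      circleAverage (fun z ↦ z ^ (-n) • f z) 0 1 := by
  have hrescale := intervalIntegral.integral_comp_mul_left (a := 0) (b := p)
    (fun θ ↦ circleMap 0 1 θ ^ (-n) • f (circleMap 0 1 θ))
    (div_ne_zero Real.two_pi_pos.ne' hp.out.ne')
  rw [mul_zero, div_mul_cancel₀ _ hp.out.ne'] at hrescale
  have hscale : (1 / p) * (2 * π / p)⁻¹ = (2 * π)⁻¹ := by field_simp [hp.out.ne']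
  rw [Real.circleAverage_def, fourierCoeff_eq_intervalIntegral _ n 0, zero_add, ← hscale,
    mul_smul, ← hrescale]
  simp [AddCircle.toCircle_apply_mk, AddCircle.toCircle_zsmul, AddCircle.toCircle_neg, circleMap]

theorem hasSum_circleAverage_zpow_mul_zpow {f : ℂ → ℂ} (hf : ContinuousOn f (sphere 0 1))
    (hsum : Summable fun n : ℤ ↦ circleAverage (fun w ↦ w ^ (-n) • f w) 0 1) {z : ℂ}
    (hz : z ∈ sphere (0 : ℂ) 1) :
    HasSum (fun n : ℤ ↦ circleAverage (fun w ↦ w ^ (-n) • f w) 0 1 * z ^ n) (f z) := by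
  let g : C(UnitAddCircle, ℂ) :=
    ⟨fun t ↦ f t.toCircle, hf.comp_continuous (by fun_prop) fun t ↦ t.toCircle.2⟩
  have hg : fourierCoeff g = fun n ↦ circleAverage (fun w ↦ w ^ (-n) • f w) 0 1 :=
    funext (fourierCoeff_comp_toCircle f)
  obtain ⟨t, ht⟩ := (AddCircle.homeomorphCircle one_ne_zero).surjective ⟨z, hz⟩
  rw [AddCircle.homeomorphCircle_apply] at ht
  have hfourier := has_pointwise_sum_fourier_series_of_summable (hg ▸ hsum) t
  have hgt : g t = f z := congrArg (fun u : Circle ↦ f u) ht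
  rw [hg, hgt] at hfourier
  have hzpow (n : ℤ) : fourier n t = z ^ n := by
    rw [fourier_apply, AddCircle.toCircle_zsmul, Circle.coe_zpow, ht]
  simpa only [hzpow, smul_eq_mul] using hfourier

theorem continuousOn_comp_re {X : Type*} [TopologicalSpace X] {f : ℝ → X}
    (hf : ContinuousOn f (Icc (-1) 1)) :
    ContinuousOn (fun z : ℂ ↦ f z.re) (sphere 0 1) :=
  hf.comp continuous_re.continuousOn fun z hz ↦
    abs_le.1 <| (abs_re_le_norm z).trans_eq (by simpa using hz)

theorem circleAverage_comp_re {f : ℝ → F} (hf : ContinuousOn f (Icc (-1) 1)) :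
    circleAverage (fun z ↦ f z.re) 0 1 = π⁻¹ • ∫ θ in 0..π, f (Real.cos θ) := by
  have hcont : Continuous fun θ ↦ f (Real.cos θ) :=
    hf.comp_continuous Real.continuous_cos Real.cos_mem_Icc
  have hreflect : ∫ θ in π..2 * π, f (Real.cos θ) = ∫ θ in 0..π, f (Real.cos θ) := by
    have := intervalIntegral.integral_comp_sub_left (a := π) (b := 2 * π)
      (fun θ ↦ f (Real.cos θ)) (2 * π)
    simp only [Real.cos_two_pi_sub] at this
    rw [this, sub_self, two_mul, add_sub_cancel_right]
  rw [Real.circleAverage_def]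
  simp only [circleMap_zero, ofReal_one, one_mul, exp_ofReal_mul_I_re]
  rw [← intervalIntegral.integral_add_adjacent_intervals (b := π)
    (hcont.intervalIntegrable _ _) (hcont.intervalIntegrable _ _), hreflect, ← two_smul ℝ,
    smul_smul]
  congr 1
  field_simp

theorem integral_inv_sqrt_one_sub_sq_smul (f : ℝ → F) :
    ∫ y in (-1)..1, (√(1 - y ^ 2))⁻¹ • f y = ∫ θ in 0..π, f (Real.cos θ) := by
  have hsubst := intervalIntegral.integral_deriv_smul_comp_of_deriv_nonpos (a := -1) (b := 1)
    (g := fun θ ↦ f (Real.cos θ)) Real.continuous_arccos.continuousOn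
    (fun y hy ↦ Real.hasDerivAt_arccos (by rintro rfl; simp at hy) (by rintro rfl; simp at hy))
    (by simp)
  rw [Real.arccos_one, Real.arccos_neg_one, intervalIntegral.integral_symm 0 π] at hsubst
  rw [← neg_inj, ← hsubst, ← intervalIntegral.integral_neg]
  refine intervalIntegral.integral_congr fun y hy ↦ ?_
  rw [uIcc_of_le (by norm_num)] at hy
  simp [Real.cos_arccos hy.1 hy.2]

theorem zpow_add_zpow_neg_eq_two_mul_eval_T_re {z : ℂ} (hz : ‖z‖ = 1) (n : ℤ) :
    z ^ n + z ^ (-n) = 2 * ((T ℝ n).eval z.re : ℝ) := by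
  obtain ⟨θ, rfl⟩ := norm_eq_one_iff z |>.1 hz
  rw [exp_ofReal_mul_I_re, Polynomial.Chebyshev.T_real_cos, ofReal_cos, two_cos, ← exp_int_mul,
    ← exp_int_mul]
  push_cast
  ring_nf

theorem circleAverage_zpow_neg_smul_comp_re (f : ℝ → E) (n : ℤ) :
    circleAverage (fun z ↦ z ^ (-n) • f z.re) 0 1 =
      circleAverage (fun z ↦ z ^ n • f z.re) 0 1 := by
  rw [← Real.circleAverage_zero_one_congr_inv]
  refine Real.circleAverage_congr_sphere fun z hz ↦ ?_
  have hz1 : ‖z‖ = 1 := by simpa using hz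
  simp [inv_re, normSq_eq_norm_sq, hz1]

theorem circleAverage_zpow_smul_comp_re {f : ℝ → E} (hf : ContinuousOn f (Icc (-1) 1)) (n : ℤ) :
    circleAverage (fun z ↦ z ^ n • f z.re) 0 1 =
      π⁻¹ • ∫ y in (-1)..1, ((T ℝ n).eval y / √(1 - y ^ 2)) • f y := by
  have hint (m : ℤ) : CircleIntegrable (fun z : ℂ ↦ z ^ m • f z.re) 0 1 :=
    ContinuousOn.circleIntegrable zero_le_one <|
      (continuousOn_id.zpow₀ m fun z hz ↦ .inl (ne_of_mem_sphere hz one_ne_zero)).smul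
        (continuousOn_comp_re hf)
  -- Averaging over `z ↦ z⁻¹` replaces `z ^ n` by its symmetrization `T_n (re z)`.
  have hsum : (2 : ℝ) • circleAverage (fun z ↦ z ^ n • f z.re) 0 1 =
      (2 : ℝ) • circleAverage (fun z : ℂ ↦ (T ℝ n).eval z.re • f z.re) 0 1 := by
    nth_rw 1 [two_smul, ← circleAverage_zpow_neg_smul_comp_re]
    rw [add_comm, ← Real.circleAverage_fun_add (hint n) (hint (-n)),
      ← Real.circleAverage_fun_smul]
    refine Real.circleAverage_congr_sphere fun z hz ↦ ?_
    have hz1 : ‖z‖ = 1 := by simpa using hz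
    simp only [← add_smul, zpow_add_zpow_neg_eq_two_mul_eval_T_re hz1, mul_smul, coe_smul]
    rw [← coe_smul (2 : ℝ), ofReal_ofNat]
  rw [smul_right_injective E two_ne_zero hsum,
    circleAverage_comp_re (f := fun y ↦ (T ℝ n).eval y • f y) (by fun_prop),
    ← integral_inv_sqrt_one_sub_sq_smul fun y ↦ (T ℝ n).eval y • f y]
  simp only [smul_smul, div_eq_inv_mul]

/-- The `k`-th Chebyshev coefficient of a function on `[-1, 1]`, with normalising factor `1 / π` for
`k = 0` and `2 / π` otherwise. The weight is kept inside the scalar, so that `f` may be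
vector-valued. -/
noncomputable def chebyshevCoeff (f : ℝ → F) (k : ℕ) : F :=
  ((if k = 0 then 1 else 2) / π : ℝ) • ∫ y in (-1)..1, ((T ℝ k).eval y / √(1 - y ^ 2)) • f y

theorem chebyshevCoeff_eq_smul_circleAverage {f : ℝ → E} (hf : ContinuousOn f (Icc (-1) 1))
    (k : ℕ) : chebyshevCoeff f k =
      (if k = 0 then 1 else 2 : ℝ) • circleAverage (fun z ↦ z ^ (-(k : ℤ)) • f z.re) 0 1 := by
  rw [circleAverage_zpow_neg_smul_comp_re, circleAverage_zpow_smul_comp_re hf, smul_smul,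
    ← div_eq_mul_inv, chebyshevCoeff]

theorem exists_mem_sphere_re_eq {y : ℝ} (hy : y ∈ Icc (-1) 1) :
    ∃ z ∈ sphere (0 : ℂ) 1, z.re = y :=
  ⟨exp (Real.arccos y * I), by simp, by rw [exp_ofReal_mul_I_re, Real.cos_arccos hy.1 hy.2]⟩

theorem hasSum_chebyshevCoeff_mul_eval_T {f : ℝ → ℂ} (hf : ContinuousOn f (Icc (-1) 1))
    (hsum : Summable (chebyshevCoeff f)) {y : ℝ} (hy : y ∈ Icc (-1) 1) :
    HasSum (fun k ↦ chebyshevCoeff f k * ((T ℝ k).eval y : ℝ)) (f y) := by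
  obtain ⟨z, hz, rfl⟩ := exists_mem_sphere_re_eq hy
  set c : ℤ → ℂ := fun n ↦ circleAverage (fun w ↦ w ^ (-n) • f w.re) 0 1 with hc
  have hc_neg (n : ℤ) : c (-n) = c n := by
    simp only [hc, circleAverage_zpow_neg_smul_comp_re]
  have hcoeff (k : ℕ) : chebyshevCoeff f k = (if k = 0 then 1 else 2) * c k := by
    rw [chebyshevCoeff_eq_smul_circleAverage hf]
    split_ifs <;> simp [hc]
  have hc_summable : Summable c := by
    have hc_nat : Summable fun k : ℕ ↦ c k := .of_norm_bounded hsum.norm fun k ↦ by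
      rw [hcoeff, norm_mul]
      exact le_mul_of_one_le_left (norm_nonneg _) (by split_ifs <;> norm_num)
    exact .of_nat_of_neg hc_nat (by simpa only [hc_neg] using hc_nat)
  have hfourier : HasSum (fun n ↦ c n * z ^ n) (f z.re) :=
    hasSum_circleAverage_zpow_mul_zpow (continuousOn_comp_re hf) hc_summable hz
  have hsymm := hfourier.nat_add_neg.sub (hasSum_ite_eq 0 (c 0))
  rw [zpow_zero, mul_one, add_sub_cancel_right] at hsymm
  have hterm (k : ℕ) : c k * z ^ (k : ℤ) + c (-k) * z ^ (-k : ℤ) - (if k = 0 then c 0 else 0) =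
      chebyshevCoeff f k * ((T ℝ k).eval z.re : ℝ) := by
    rw [hc_neg, ← mul_add, zpow_add_zpow_neg_eq_two_mul_eval_T_re (by simpa using hz), hcoeff]
    split_ifs with hk
    · simp only [hk, Nat.cast_zero, Polynomial.Chebyshev.T_zero, Polynomial.eval_one, ofReal_one]
      ring
    · ring
  simpa only [hterm] using hsymm

/-- The Joukowski map `z ↦ (z + z⁻¹) / 2`, which folds the unit circle onto `[-1, 1]`. It is used
only away from `0`. -/
noncomputable def joukowski (z : ℂ) : ℂ := (z + z⁻¹) / 2

/-- The open Bernstein ellipse with parameter `ρ`, encoded as the image under the Joukowski map of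
the annulus `ρ⁻¹ < ‖z‖ < ρ`. -/
def bernsteinEllipse (ρ : ℝ) : Set ℂ := joukowski '' (ball 0 ρ \ closedBall 0 ρ⁻¹)

theorem joukowski_eq_re {z : ℂ} (hz : z ∈ sphere (0 : ℂ) 1) : joukowski z = z.re := by
  rw [joukowski, inv_eq_conj (by simpa using hz), re_eq_add_conj]

theorem sphere_zero_one_subset_annulus {ρ : ℝ} (hρ : 1 < ρ) :
    sphere (0 : ℂ) 1 ⊆ ball 0 ρ \ closedBall 0 ρ⁻¹ := fun z hz ↦ by
  have hz1 : ‖z‖ = 1 := by simpa using hz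
  simpa [hz1, hρ] using inv_lt_one_of_one_lt₀ hρ

theorem ofReal_mem_bernsteinEllipse {ρ y : ℝ} (hρ : 1 < ρ) (hy : y ∈ Icc (-1) 1) :
    (y : ℂ) ∈ bernsteinEllipse ρ := by
  obtain ⟨z, hz, rfl⟩ := exists_mem_sphere_re_eq hy
  exact ⟨z, sphere_zero_one_subset_annulus hρ hz, joukowski_eq_re hz⟩

theorem continuousOn_comp_ofReal_of_bernsteinEllipse {X : Type*} [TopologicalSpace X] {ρ : ℝ}
    {f : ℂ → X} (hρ : 1 < ρ) (hf : ContinuousOn f (bernsteinEllipse ρ)) :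
    ContinuousOn (fun y : ℝ ↦ f y) (Icc (-1) 1) :=
  hf.comp continuous_ofReal.continuousOn fun _ ↦ ofReal_mem_bernsteinEllipse hρ

theorem differentiableOn_joukowski : DifferentiableOn ℂ joukowski {0}ᶜ :=
  (differentiableOn_id.add differentiableOn_inv).div_const 2

theorem norm_chebyshevCoeff_le {ρ M : ℝ} {f : ℂ → E} (hρ : 1 < ρ)
    (hf : DifferentiableOn ℂ f (bernsteinEllipse ρ)) (hM : ∀ w ∈ bernsteinEllipse ρ, ‖f w‖ ≤ M)
    (k : ℕ) : ‖chebyshevCoeff (fun y : ℝ ↦ f y) k‖ ≤ 2 * M * ρ ^ (-(k : ℤ)) := by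
  have hρ0 : 0 < ρ := one_pos.trans hρ
  have hpullback : DifferentiableOn ℂ (f ∘ joukowski) (ball 0 ρ \ closedBall 0 ρ⁻¹) := by
    refine hf.comp (differentiableOn_joukowski.mono fun z hz ↦ ?_) (mapsTo_image _ _)
    rintro rfl
    exact hz.2 (mem_closedBall_self (by positivity))
  have hcauchy : ‖circleAverage (fun z ↦ z ^ (-(k : ℤ)) • f (joukowski z)) 0 1‖ ≤
      M * ρ ^ (-(k : ℤ)) := by
    simpa using norm_circleAverage_zpow_smul_le (inv_nonneg.2 hρ0.le) hpullback
      (fun z hz ↦ hM _ (mem_image_of_mem _ hz)) ⟨inv_lt_one_of_one_lt₀ hρ, hρ⟩ (-k)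
  rw [chebyshevCoeff_eq_smul_circleAverage
      (continuousOn_comp_ofReal_of_bernsteinEllipse hρ hf.continuousOn),
    Real.circleAverage_congr_sphere (f₂ := fun z ↦ z ^ (-(k : ℤ)) • f (joukowski z))
      fun z hz ↦ by simp only [joukowski_eq_re (abs_one (α := ℝ) ▸ hz)], norm_smul, mul_assoc]
  gcongr
  split_ifs <;> norm_num

theorem norm_sub_sum_chebyshevCoeff_mul_eval_T_le {ρ M : ℝ} {f : ℂ → ℂ} (hρ : 1 < ρ)
    (hf : DifferentiableOn ℂ f (bernsteinEllipse ρ)) (hM : ∀ w ∈ bernsteinEllipse ρ, ‖f w‖ ≤ M)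
    (m : ℕ) {y : ℝ} (hy : y ∈ Icc (-1) 1) :
    ‖f y - ∑ k ∈ Finset.range (m + 1),
        chebyshevCoeff (fun x : ℝ ↦ f x) k * ((T ℝ k).eval y : ℝ)‖ ≤
      2 * M * ρ ^ (-(m : ℤ)) / (ρ - 1) := by
  have : 0 < ρ := one_pos.trans hρ
  have hρ1 : ρ⁻¹ < 1 := inv_lt_one_of_one_lt₀ hρ
  have hcoeff (k : ℕ) : ‖chebyshevCoeff (fun x : ℝ ↦ f x) k‖ ≤ 2 * M * ρ⁻¹ ^ k := by
    simpa using norm_chebyshevCoeff_le hρ hf hM k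
  have hsum : Summable (chebyshevCoeff fun x : ℝ ↦ f x) :=
    .of_norm_bounded ((summable_geometric_of_lt_one (by positivity) hρ1).mul_left _) hcoeff
  have hterm (k : ℕ) :
      ‖chebyshevCoeff (fun x : ℝ ↦ f x) k * ((T ℝ k).eval y : ℝ)‖ ≤ 2 * M * ρ⁻¹ ^ k := by
    rw [norm_mul, norm_real]
    exact (mul_le_of_le_one_right (norm_nonneg _)
      (Polynomial.Chebyshev.abs_eval_T_real_le_one k (abs_le.2 hy))).trans (hcoeff k)
  rw [norm_sub_rev]
  calc
    _ ≤ 2 * M * ρ⁻¹ ^ (m + 1) / (1 - ρ⁻¹) :=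
      norm_sub_le_of_geometric_bound_of_hasSum hρ1 hterm
        (hasSum_chebyshevCoeff_mul_eval_T
          (continuousOn_comp_ofReal_of_bernsteinEllipse hρ hf.continuousOn) hsum hy) (m + 1)
    _ = 2 * M * ρ ^ (-(m : ℤ)) / (ρ - 1) := by
      rw [inv_pow, zpow_neg, zpow_natCast, pow_succ]
      field_simp

end

/-- Let `ρ > 1` and let `B_ρ` be the open Bernstein ellipse
`{(z + z⁻¹)/2 : ρ⁻¹ < |z| < ρ}`.  If `f` is analytic on `B_ρ` and bounded by `M` there,
and `a_k` are its Chebyshev coefficients (`a₀ = (1/π)∫ f/√(1-y²)`,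
`a_k = (2/π)∫ f T_k/√(1-y²)` for `k ≥ 1`), then `|a_k| ≤ 2 M ρ^{-k}` for all `k ≥ 0` and
`max_{y∈[-1,1]} |f(y) - ∑_{k=0}^m a_k T_k(y)| ≤ 4 M ρ^{-m}/(ρ - 1)` for every `m ≥ 0`. -/
theorem stmt_6
    (ρ : ℝ) (hρ : 1 < ρ)
    (B : Set ℂ)
    (hB : B = {w : ℂ | ∃ z : ℂ, ρ⁻¹ < ‖z‖ ∧ ‖z‖ < ρ ∧ w = (z + z⁻¹) / 2})
    (f : ℂ → ℂ) (hf : DifferentiableOn ℂ f B)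
    (M : ℝ) (hM : ∀ z ∈ B, ‖f z‖ ≤ M)
    (a : ℕ → ℂ)
    (ha0 : a 0 = (1 / Real.pi) *
      ∫ y in (-1:ℝ)..1, f (y : ℂ) / ((Real.sqrt (1 - y ^ 2) : ℝ) : ℂ))
    (hak : ∀ k : ℕ, 1 ≤ k → a k = (2 / Real.pi) *
      ∫ y in (-1:ℝ)..1,
        f (y : ℂ) * (((Polynomial.Chebyshev.T ℝ k).eval y : ℝ) : ℂ)
          / ((Real.sqrt (1 - y ^ 2) : ℝ) : ℂ)) :
    (∀ k : ℕ, ‖a k‖ ≤ 2 * M * ρ ^ (-(k : ℤ))) ∧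
    ∀ m : ℕ, ∀ y ∈ Set.Icc (-1:ℝ) 1,
      ‖f (y : ℂ) - ∑ k ∈ Finset.range (m + 1),
          a k * (((Polynomial.Chebyshev.T ℝ k).eval y : ℝ) : ℂ)‖
        ≤ 4 * M * ρ ^ (-(m : ℤ)) / (ρ - 1) := by
  have ha : a = chebyshevCoeff fun y : ℝ ↦ f y := by
    funext k
    rw [chebyshevCoeff]
    rcases k.eq_zero_or_pos with rfl | hk
    · simp [ha0, div_eq_inv_mul]
    · simp [hak k hk, hk.ne', div_eq_inv_mul, mul_assoc, mul_comm, mul_left_comm]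
  have hB : B = bernsteinEllipse ρ := by
    ext w
    simp [hB, bernsteinEllipse, joukowski, and_assoc, and_left_comm, eq_comm]
  rw [hB] at hf hM
  subst ha
  refine ⟨norm_chebyshevCoeff_le hρ hf hM, fun m y hy ↦ ?_⟩
  refine (norm_sub_sum_chebyshevCoeff_mul_eval_T_le hρ hf hM m hy).trans ?_
  have hM0 : 0 ≤ M := (norm_nonneg _).trans (hM _ (ofReal_mem_bernsteinEllipse hρ hy))
  have : 0 < ρ - 1 := sub_pos.2 hρ
  gcongr
  norm_num
end

section
/- The g × g complex matrix A with entries A_{kj} = ∫_{β_j}^{α_{j+1}} ζ^{k−1}/R(ζ) dζ (k, j = 1, …, g), where the integrals are taken over the gaps (β_j, α_{j+1}) and converge absolutely since 1/R has only square-root singularities at the gap endpoints, is invertible. -/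
open Complex Filter

/-!
On the gap `(β_j, α_{j+1})` the polynomial `P` is negative, so continuity and `R² = P` force
`R = ε_j √(-P)` with a constant `ε_j = ± i`. Pulling the `ε_j` out of the columns, we are left with
the moments `∫ x ^ k / √(-P)` of positive weights on disjoint intervals. A vanishing combination of
the rows is a polynomial of degree `< g` whose weighted mean over every gap is zero; by the mean
value theorem it has a root in each of the `g` gaps, so it is zero (Vandermonde).
-/

section DeterminantsOfIntegrals

open MeasureTheory Set Function

theorem det_setIntegral_mul_ne_zero {ι X : Type*} [Fintype ι] [DecidableEq ι]
    [TopologicalSpace X] [MeasurableSpace X] {μ : Measure X} {s : ι → Set X} {f w : ι → X → ℝ}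
    (hs_conn : ∀ j, IsConnected (s j)) (hs_meas : ∀ j, MeasurableSet (s j))
    (hf : ∀ k j, ContinuousOn (f k) (s j)) (hw : ∀ j, IntegrableOn (w j) (s j) μ)
    (hw_nonneg : ∀ j, ∀ x ∈ s j, 0 ≤ w j x) (hw_integral : ∀ j, ∫ x in s j, w j x ∂μ ≠ 0)
    (hfw : ∀ k j, IntegrableOn (fun x => f k x * w j x) (s j) μ)
    (hdet : ∀ x : ι → X, (∀ j, x j ∈ s j) → (Matrix.of fun k j => f k (x j)).det ≠ 0) :
    (Matrix.of fun k j => ∫ x in s j, f k x * w j x ∂μ).det ≠ 0 := by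
  intro h
  obtain ⟨v, hv_ne, hv⟩ := Matrix.exists_vecMul_eq_zero_iff.mpr h
  have hroot : ∀ j, ∃ x ∈ s j, ∑ k, v k * f k x = 0 := by
    intro j
    have hfun : (fun x => (∑ k, v k * f k x) * w j x) =
        fun x => ∑ k, v k * (f k x * w j x) := by
      simp only [Finset.sum_mul, mul_assoc]
    have hint : ∀ k ∈ Finset.univ,
        Integrable (fun x => v k * (f k x * w j x)) (μ.restrict (s j)) :=
      fun k _ => (hfw k j).const_mul (v k)
    have hzero : ∫ x in s j, (∑ k, v k * f k x) * w j x ∂μ = 0 := by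
      rw [hfun, integral_finsetSum _ hint]
      simpa only [integral_const_mul, Matrix.vecMul, dotProduct] using! congrFun hv j
    obtain ⟨x, hx, hmean⟩ := exists_eq_const_mul_setIntegral_of_nonneg (hs_conn j) (hs_meas j)
      (continuousOn_finsetSum _ fun k _ => (hf k j).const_mul (v k)) (hw j)
      (by rw [hfun]; exact integrable_finsetSum _ hint) (hw_nonneg j)
    exact ⟨x, hx, (mul_eq_zero.mp (hmean.symm.trans hzero)).resolve_right (hw_integral j)⟩
  choose x hx hx_root using hroot
  exact hv_ne (Matrix.eq_zero_of_vecMul_eq_zero (hdet x hx) (funext hx_root))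

theorem det_weighted_moments_ne_zero {n : ℕ} {c d : Fin n → ℝ} {w : Fin n → ℝ → ℝ}
    (hcd : ∀ j, c j < d j) (hdisj : Pairwise (Disjoint on fun j => Ioo (c j) (d j)))
    (hw : ∀ j, IntervalIntegrable (w j) volume (c j) (d j))
    (hw_pos : ∀ j, ∀ x ∈ Ioo (c j) (d j), 0 < w j x) :
    (Matrix.of fun k j : Fin n => ∫ x in c j..d j, x ^ (k : ℕ) * w j x).det ≠ 0 := by
  have hIoo : ∀ (j : Fin n) (f : ℝ → ℝ), ∫ x in c j..d j, f x = ∫ x in Ioo (c j) (d j), f x :=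
    fun j f => by rw [intervalIntegral.integral_of_le (hcd j).le, integral_Ioc_eq_integral_Ioo]
  have hint : ∀ (j : Fin n) {f : ℝ → ℝ}, IntervalIntegrable f volume (c j) (d j) →
      IntegrableOn f (Ioo (c j) (d j)) :=
    fun j => (intervalIntegrable_iff_integrableOn_Ioo_of_le (hcd j).le).mp
  simp only [hIoo]
  refine det_setIntegral_mul_ne_zero (f := fun (k : Fin n) x => x ^ (k : ℕ))
    (fun j => isConnected_Ioo (hcd j)) (fun _ => measurableSet_Ioo)
    (fun k _ => (continuous_pow (k : ℕ)).continuousOn) (fun j => hint j (hw j))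
    (fun j x hx => (hw_pos j x hx).le) (fun j => ?_)
    (fun k j => hint j ((hw j).continuousOn_mul (continuous_pow (k : ℕ)).continuousOn))
    fun x hx => ?_
  · rw [← hIoo]
    exact (intervalIntegral.intervalIntegral_pos_of_pos_on (hw j) (hw_pos j) (hcd j)).ne'
  · have hinj : Injective x := fun i j hij => by_contra fun hne =>
      disjoint_left.mp (hdisj hne) (hx i) (hij ▸ hx j)
    rw [← Matrix.det_transpose]
    exact Matrix.det_vandermonde_ne_zero_iff.mpr hinj

end DeterminantsOfIntegrals

section SquareRoots

open MeasureTheory Set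

theorem intervalIntegrable_inv_sqrt_sub_mul_sub (c d : ℝ) :
    IntervalIntegrable (fun x => (√((x - c) * (d - x)))⁻¹) volume c d := by
  wlog hcd : c < d generalizing c d
  · rcases (not_lt.mp hcd).eq_or_lt with rfl | hdc
    · exact .refl
    · refine (this d c hdc).symm.congr fun x _ => ?_
      simp only [show (x - d) * (c - x) = (x - c) * (d - x) by ring]
  rw [intervalIntegrable_iff, uIoc_of_le hcd.le]
  have hpos : 0 < d - c := sub_pos.mpr hcd
  refine intervalIntegral.integrableOn_deriv_of_nonneg
    (g := fun x => Real.arcsin ((2 * x - c - d) / (d - c)))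
    (Real.continuous_arcsin.comp (by fun_prop)).continuousOn (fun x hx => ?_)
    fun x _ => by positivity
  have hlin : HasDerivAt (fun x : ℝ => (2 * x - c - d) / (d - c)) (2 / (d - c)) x := by
    simpa using ((((hasDerivAt_id x).const_mul 2).sub_const c).sub_const d).div_const (d - c)
  have hleft : (2 * x - c - d) / (d - c) ≠ -1 := by
    rw [Ne, div_eq_iff hpos.ne']; linarith [hx.1]
  have hright : (2 * x - c - d) / (d - c) ≠ 1 := by
    rw [Ne, div_eq_iff hpos.ne']; linarith [hx.2]
  have hsqrt : √(1 - ((2 * x - c - d) / (d - c)) ^ 2) = 2 / (d - c) * √((x - c) * (d - x)) := by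
    rw [← Real.sqrt_sq (by positivity : 0 ≤ 2 / (d - c)), ← Real.sqrt_mul (sq_nonneg _)]
    congr 1
    field_simp
    ring
  convert! (Real.hasDerivAt_arcsin hleft hright).comp x hlin using 1
  rw [hsqrt]
  field_simp

theorem exists_eq_const_mul_sqrt_neg {X : Type*} [TopologicalSpace X] {s : Set X}
    (hs : IsPreconnected s) {f : X → ℂ} {p : X → ℝ} (hf : ContinuousOn f s)
    (hp : ContinuousOn p s) (hp_neg : ∀ x ∈ s, p x < 0) (hsq : ∀ x ∈ s, f x ^ 2 = p x) :
    ∃ ε : ℂ, ε ≠ 0 ∧ ∀ x ∈ s, f x = ε * √(-p x) := by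
  have hsqrt_ne : ∀ x ∈ s, (√(-p x) : ℂ) ≠ 0 := fun x hx =>
    ofReal_ne_zero.mpr (Real.sqrt_ne_zero'.mpr (neg_pos.mpr (hp_neg x hx)))
  have hcont : ContinuousOn (fun x => I * (√(-p x) : ℂ)) s := by fun_prop
  have hsq' : EqOn (f ^ 2) ((fun x => I * (√(-p x) : ℂ)) ^ 2) s := fun x hx => by
    have hreal : √(-p x) ^ 2 = -p x := Real.sq_sqrt (neg_nonneg.mpr (hp_neg x hx).le)
    simp only [Pi.pow_apply, hsq x hx, mul_pow, I_sq, ← ofReal_pow, hreal]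
    push_cast
    ring
  rcases hs.eq_or_eq_neg_of_sq_eq hf hcont hsq' fun hx => mul_ne_zero I_ne_zero (hsqrt_ne _ hx)
    with h | h
  · exact ⟨I, I_ne_zero, h⟩
  · exact ⟨-I, neg_ne_zero.mpr I_ne_zero, fun x hx => by simpa using h hx⟩

theorem intervalIntegral_div_eq_const_mul {c d : ℝ} (hcd : c ≤ d) {f : ℝ → ℂ} {q : ℝ → ℝ} {ε : ℂ}
    (hf : ∀ x ∈ Ioo c d, f x = ε * q x) (p : ℝ → ℝ) :
    ∫ x in c..d, (p x : ℂ) / f x = ε⁻¹ * ((∫ x in c..d, p x * (q x)⁻¹ : ℝ) : ℂ) := by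
  rw [← intervalIntegral.integral_ofReal, ← intervalIntegral.integral_const_mul]
  refine intervalIntegral.integral_congr_Ioo_of_le hcd fun x hx => ?_
  simp only [hf x hx]
  push_cast
  ring

end SquareRoots

section BandsAndGaps

open MeasureTheory Set Function

/-- The real polynomial `P(x) = (x - α_{g+1}) ∏_{j=1}^{g} (x - α_j) (x - β_j)` with zeros at the
band endpoints; as in the paper, `a` and `b` are indexed from `1`. -/
def bandPoly (g : ℕ) (a b : ℕ → ℝ) (x : ℝ) : ℝ :=
  (x - a (g + 1)) * ∏ j ∈ Finset.Icc 1 g, ((x - a j) * (x - b j))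

/-- The cofactor of `(x - β_j) (x - α_{j+1})` in `P`, that is, the product of the linear factors
of `P` that do not vanish at the endpoints of the `j`-th gap. -/
def gapCofactor (g : ℕ) (a b : ℕ → ℝ) (j : ℕ) (x : ℝ) : ℝ :=
  (x - a 1) * ∏ i ∈ (Finset.Icc 1 g).erase j, ((x - b i) * (x - a (i + 1)))

variable {g : ℕ} {a b : ℕ → ℝ} {i j : ℕ} {x : ℝ}

theorem bandPoly_eq_mul_prod_gaps (g : ℕ) (a b : ℕ → ℝ) (x : ℝ) :
    bandPoly g a b x = (x - a 1) * ∏ j ∈ Finset.Icc 1 g, ((x - b j) * (x - a (j + 1))) := by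
  unfold bandPoly
  induction g with
  | zero => simp
  | succ n ih =>
    rw [Finset.prod_Icc_succ_top (by lia), Finset.prod_Icc_succ_top (by lia)]
    linear_combination (x - b (n + 1)) * (x - a (n + 1 + 1)) * ih

theorem neg_bandPoly_eq_mul_gapCofactor (hj : j ∈ Finset.Icc 1 g) :
    -bandPoly g a b x = (x - b j) * (a (j + 1) - x) * gapCofactor g a b j x := by
  rw [bandPoly_eq_mul_prod_gaps, ← Finset.mul_prod_erase _ _ hj, gapCofactor]
  ring

theorem continuous_bandPoly : Continuous (bandPoly g a b) := by
  unfold bandPoly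
  fun_prop

theorem continuous_gapCofactor : Continuous (gapCofactor g a b j) := by
  unfold gapCofactor
  fun_prop

variable (hord : ∀ j ∈ Finset.Icc 1 g, a j < b j ∧ b j < a (j + 1))
include hord

theorem monotoneOn_band_left : MonotoneOn a (Icc 1 (g + 1)) := by
  refine monotoneOn_of_le_add_one ordConnected_Icc fun j _ hj hj' => ?_
  have := hord j (Finset.mem_Icc.mpr ⟨hj.1, by simpa using hj'.2⟩)
  linarith

theorem gap_right_lt_gap_left (hi : i ∈ Finset.Icc 1 g) (hj : j ∈ Finset.Icc 1 g) (hij : i < j) :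
    a (i + 1) < b j := by
  rw [Finset.mem_Icc] at hi hj
  calc a (i + 1) ≤ a j := monotoneOn_band_left hord ⟨by lia, by lia⟩ ⟨by lia, by lia⟩ hij
    _ < b j := (hord j (Finset.mem_Icc.mpr hj)).1

theorem disjoint_gaps (hi : i ∈ Finset.Icc 1 g) (hj : j ∈ Finset.Icc 1 g) (hij : i ≠ j) :
    Disjoint (Ioo (b i) (a (i + 1))) (Ioo (b j) (a (j + 1))) := by
  refine disjoint_left.mpr fun x hxi hxj => ?_
  rcases hij.lt_or_gt with h | h
  · linarith [gap_right_lt_gap_left hord hi hj h, hxi.2, hxj.1]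
  · linarith [gap_right_lt_gap_left hord hj hi h, hxj.2, hxi.1]

theorem notMem_bands_of_mem_gap (hj : j ∈ Finset.Icc 1 g) (hx : x ∈ Ioo (b j) (a (j + 1))) :
    x ∉ Ici (a (g + 1)) ∪ ⋃ j ∈ Finset.Icc 1 g, Icc (a j) (b j) := by
  have hmono := monotoneOn_band_left hord
  have hj' := Finset.mem_Icc.mp hj
  simp only [mem_union, mem_Ici, mem_iUnion, mem_Icc, not_or, not_exists, not_and, not_le]
  refine ⟨hx.2.trans_le (hmono ⟨by lia, by lia⟩ ⟨by lia, by lia⟩ (by lia)), fun i hi hxi => ?_⟩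
  have hi' := Finset.mem_Icc.mp hi
  rcases lt_trichotomy i j with h | rfl | h
  · linarith [gap_right_lt_gap_left hord hi hj h, (hord i hi).2, hx.1]
  · exact hx.1
  · linarith [hmono ⟨by lia, by lia⟩ ⟨by lia, by lia⟩ (Nat.succ_le_of_lt h), hx.2]

theorem gapCofactor_pos (hj : j ∈ Finset.Icc 1 g) (hx : x ∈ Icc (b j) (a (j + 1))) :
    0 < gapCofactor g a b j x := by
  have hj' := Finset.mem_Icc.mp hj
  have ha : a 1 ≤ a j :=
    monotoneOn_band_left hord ⟨le_rfl, by lia⟩ ⟨hj'.1, by lia⟩ hj'.1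
  refine mul_pos (by linarith [(hord j hj).1, hx.1]) (Finset.prod_pos fun i hi => ?_)
  obtain ⟨hij, hi⟩ := Finset.mem_erase.mp hi
  have hgap := (hord i hi).2
  rcases hij.lt_or_gt with h | h
  · have := gap_right_lt_gap_left hord hi hj h
    exact mul_pos (by linarith [hx.1]) (by linarith [hx.1])
  · have := gap_right_lt_gap_left hord hj hi h
    exact mul_pos_of_neg_of_neg (by linarith [hx.2]) (by linarith [hx.2])

theorem bandPoly_neg_of_mem_gap (hj : j ∈ Finset.Icc 1 g) (hx : x ∈ Ioo (b j) (a (j + 1))) :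
    bandPoly g a b x < 0 := by
  rw [← neg_pos, neg_bandPoly_eq_mul_gapCofactor hj]
  exact mul_pos (mul_pos (sub_pos.mpr hx.1) (sub_pos.mpr hx.2))
    (gapCofactor_pos hord hj (Ioo_subset_Icc_self hx))

theorem intervalIntegrable_inv_sqrt_neg_bandPoly (hj : j ∈ Finset.Icc 1 g) :
    IntervalIntegrable (fun x => (√(-bandPoly g a b x))⁻¹) volume (b j) (a (j + 1)) := by
  have hgap := (hord j hj).2.le
  have hcofactor : ContinuousOn (fun x => (√(gapCofactor g a b j x))⁻¹) (uIcc (b j) (a (j + 1))) :=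
    continuous_gapCofactor.sqrt.continuousOn.inv₀ fun x hx =>
      Real.sqrt_ne_zero'.mpr (gapCofactor_pos hord hj (uIcc_of_le hgap ▸ hx))
  refine ((intervalIntegrable_inv_sqrt_sub_mul_sub (b j) (a (j + 1))).mul_continuousOn
    hcofactor).congr fun x hx => ?_
  rw [uIoc_of_le hgap] at hx
  have hnonneg : 0 ≤ (x - b j) * (a (j + 1) - x) :=
    mul_nonneg (sub_nonneg.mpr hx.1.le) (sub_nonneg.mpr hx.2)
  simp only [neg_bandPoly_eq_mul_gapCofactor hj, Real.sqrt_mul hnonneg, mul_inv]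

theorem stmt_8_general {R : ℝ → ℂ}
    (hR : ∀ j ∈ Finset.Icc 1 g, ContinuousOn R (Ioo (b j) (a (j + 1))))
    (hRsq : ∀ j ∈ Finset.Icc 1 g, ∀ x ∈ Ioo (b j) (a (j + 1)), R x ^ 2 = bandPoly g a b x) :
    IsUnit (Matrix.of fun k j : Fin g =>
      ∫ ζ in (b ((j : ℕ) + 1))..(a ((j : ℕ) + 2)), (ζ : ℂ) ^ (k : ℕ) / R ζ).det := by
  have hmem : ∀ j : Fin g, (j : ℕ) + 1 ∈ Finset.Icc 1 g := fun j =>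
    Finset.mem_Icc.mpr ⟨by lia, j.isLt⟩
  have hphase := fun j : Fin g => exists_eq_const_mul_sqrt_neg isPreconnected_Ioo
    (hR _ (hmem j)) continuous_bandPoly.continuousOn
    (fun x => bandPoly_neg_of_mem_gap hord (hmem j)) (hRsq _ (hmem j))
  choose ε hε_ne hε using hphase
  let B : Matrix (Fin g) (Fin g) ℝ := Matrix.of fun k j =>
    ∫ x in (b ((j : ℕ) + 1))..(a ((j : ℕ) + 2)), x ^ (k : ℕ) * (√(-bandPoly g a b x))⁻¹
  have hB : B.det ≠ 0 := det_weighted_moments_ne_zero (fun j => (hord _ (hmem j)).2)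
    (fun i j hij => disjoint_gaps hord (hmem i) (hmem j) (by simpa [Fin.ext_iff] using hij))
    (fun j => intervalIntegrable_inv_sqrt_neg_bandPoly hord (hmem j))
    fun j x hx => inv_pos.mpr (Real.sqrt_pos.mpr
      (neg_pos.mpr (bandPoly_neg_of_mem_gap hord (hmem j) hx)))
  simp only [← ofReal_pow, intervalIntegral_div_eq_const_mul (hord _ (hmem _)).2.le (hε _)]
  rw [isUnit_iff_ne_zero]
  refine (Matrix.det_mul_row (fun j => (ε j)⁻¹) (B.map ofRealHom)).trans_ne (mul_ne_zero ?_ ?_)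
  · exact Finset.prod_ne_zero_iff.mpr fun j _ => inv_ne_zero (hε_ne j)
  · rw [← RingHom.mapMatrix_apply, ← RingHom.map_det]
    exact ofReal_ne_zero.mpr hB

end BandsAndGaps

/-- In the band/gap setting (`g ≥ 1`, `0 ≤ α₁ < β₁ < ⋯ < β_g < α_{g+1}`,
`P`, `σ_B` as usual) let `R` be the (unique) function analytic on `ℂ ∖ σ_B` with
`R² = P` and `R(λ) = |λ|^{g+1/2}((-1)^g i + o(1))` as `λ → -∞` along ℝ (purely imaginary
and nonvanishing on the gaps).  Then the `g × g` matrix `A` with entries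
`A_{kj} = ∫_{β_j}^{α_{j+1}} ζ^{k-1}/R(ζ) dζ` is invertible. -/
theorem stmt_8
    (g : ℕ) (hg : 1 ≤ g) (a b : ℕ → ℝ)
    (ha1 : 0 ≤ a 1)
    (hord : ∀ j ∈ Finset.Icc 1 g, a j < b j ∧ b j < a (j + 1))
    (P : ℂ → ℂ)
    (hP : ∀ z : ℂ, P z = (z - (a (g + 1) : ℂ)) *
      ∏ j ∈ Finset.Icc 1 g, ((z - (a j : ℂ)) * (z - (b j : ℂ))))
    (σB : Set ℝ)
    (hσB : σB = Set.Ici (a (g + 1)) ∪ ⋃ j ∈ Finset.Icc 1 g, Set.Icc (a j) (b j))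
    (Ω : Set ℂ) (hΩ : Ω = {z : ℂ | ¬(z.im = 0 ∧ z.re ∈ σB)})
    (R : ℂ → ℂ)
    (hRanal : DifferentiableOn ℂ R Ω)
    (hRsq : ∀ z ∈ Ω, R z ^ 2 = P z)
    (hRasym : Tendsto (fun x : ℝ => R (x : ℂ) / (((|x| ^ ((g : ℝ) + 1/2) : ℝ)) : ℂ))
      atBot (nhds ((-1 : ℂ) ^ g * Complex.I)))
    (hRgap : ∀ j ∈ Finset.Icc 1 g, ∀ x ∈ Set.Ioo (b j) (a (j + 1)),
      (R (x : ℂ)).re = 0 ∧ R (x : ℂ) ≠ 0)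
    (A : Matrix (Fin g) (Fin g) ℂ)
    (hA : ∀ k j : Fin g,
      A k j = ∫ ζ in (b ((j : ℕ) + 1))..(a ((j : ℕ) + 2)), ((ζ : ℂ)) ^ (k : ℕ) / R (ζ : ℂ)) :
    IsUnit A.det := by
  have hgap : ∀ j ∈ Finset.Icc 1 g, ∀ x ∈ Set.Ioo (b j) (a (j + 1)), (x : ℂ) ∈ Ω := by
    subst hΩ hσB
    exact fun j hj x hx h => notMem_bands_of_mem_gap hord hj hx h.2
  rw [show A = Matrix.of _ from Matrix.ext hA]
  exact stmt_8_general hord (R := fun x => R x)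
    (fun j hj => hRanal.continuousOn.comp continuous_ofReal.continuousOn (hgap j hj))
    fun j hj x hx => by simp [hRsq x (hgap j hj x hx), hP, bandPoly]
end
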